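/- Let $1 < p < \infty$, let $\mathcal{S}$ be a sparse family in a dyadic grid $\mathscr{D}$, $R$ a cube, and $w$ a weight with $\sigma = w^{1-p'}$. Then $\int_R M^{\mathcal{S}}(\chi_R \sigma)^p w \, dx \lesssim (1 + \log[\sigma]_{A_{p'}}) \, [\sigma]^p_{(A_{p'})^{1/p'}(A_\infty)^{1/p}} \, \sigma(R)$, where $M^{\mathcal{S}} f = \sum_{Q\in\mathcal{S}}(\fint_Q f)\chi_{E_Q}$ and the $E_Q$ are the pairwise disjoint major subsets of the sparse cubes. -/

import Mathlib

open MeasureTheory Set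
open scoped ENNReal

noncomputable section

/-- A (closed, axis-parallel, nondegenerate) cube in `ℝⁿ`. -/
def IsCube {n : ℕ} (Q : Set (Fin n → ℝ)) : Prop :=
  ∃ (a : Fin n → ℝ) (l : ℝ), 0 < l ∧ Q = Set.Icc a (a + fun _ => l)

/-- The average `⨍_Q f` of `f` over `Q` (w.r.t. Lebesgue measure). -/
def avg {n : ℕ} (Q : Set (Fin n → ℝ)) (f : (Fin n → ℝ) → ℝ) : ℝ :=
  (volume Q).toReal⁻¹ * ∫ x in Q, f x

/-- The `A_p` quantity `A_p(w,Q) = (⨍_Q w) (⨍_Q w^{-1/(p-1)})^{p-1}`. -/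
def ApQ {n : ℕ} (p : ℝ) (w : (Fin n → ℝ) → ℝ) (Q : Set (Fin n → ℝ)) : ℝ :=
  avg Q w * (avg Q fun x => w x ^ (-(1 / (p - 1)))) ^ (p - 1)

/-- The exponential `A_∞` quantity `A_∞^exp(w,Q) = (⨍_Q w) exp(-⨍_Q log w)`. -/
def AexpQ {n : ℕ} (w : (Fin n → ℝ) → ℝ) (Q : Set (Fin n → ℝ)) : ℝ :=
  avg Q w * Real.exp (-(avg Q fun x => Real.log (w x)))

/-- A dyadic cube of generation `k` (half-open, side length `2^k`). -/
def IsDyadicCubeOf {n : ℕ} (k : ℤ) (Q : Set (Fin n → ℝ)) : Prop :=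
  ∃ a : Fin n → ℝ, Q = Set.univ.pi fun i => Set.Ico (a i) (a i + (2 : ℝ) ^ k)

/-- A dyadic grid: a collection of cubes of side lengths `2^k`, pairwise nested or
disjoint, partitioning `ℝⁿ` at each scale. -/
def IsDyadicGrid {n : ℕ} (𝒟 : Set (Set (Fin n → ℝ))) : Prop :=
  (∀ Q ∈ 𝒟, ∃ k : ℤ, IsDyadicCubeOf k Q) ∧
  (∀ Q ∈ 𝒟, ∀ P ∈ 𝒟, Q ⊆ P ∨ P ⊆ Q ∨ Disjoint Q P) ∧
  (∀ k : ℤ, ⋃₀ {Q | Q ∈ 𝒟 ∧ IsDyadicCubeOf k Q} = Set.univ ∧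
    Set.PairwiseDisjoint {Q | Q ∈ 𝒟 ∧ IsDyadicCubeOf k Q} id)

/-- The union of the strict subcubes of `Q` belonging to the family `𝒮`. -/
def strictUnion {n : ℕ} (𝒮 : Set (Set (Fin n → ℝ))) (Q : Set (Fin n → ℝ)) :
    Set (Fin n → ℝ) :=
  ⋃ Q' ∈ {Q' | Q' ∈ 𝒮 ∧ Q' ⊂ Q}, Q'

/-- The "major subset" `E_Q = Q \ ⋃ {Q' ∈ 𝒮 : Q' ⊊ Q}`. -/
def Eset {n : ℕ} (𝒮 : Set (Set (Fin n → ℝ))) (Q : Set (Fin n → ℝ)) :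
    Set (Fin n → ℝ) :=
  Q \ strictUnion 𝒮 Q

/-- A sparse family: for each `Q ∈ 𝒮`, `|⋃ {Q' ∈ 𝒮 : Q' ⊊ Q}| ≤ |Q|/2`. -/
def IsSparse {n : ℕ} (𝒮 : Set (Set (Fin n → ℝ))) : Prop :=
  ∀ Q ∈ 𝒮, volume (strictUnion 𝒮 Q) ≤ volume Q / 2

/-- The Hardy–Littlewood maximal operator (over cubes). -/
def maxHL {n : ℕ} (f : (Fin n → ℝ) → ℝ) (x : Fin n → ℝ) : ℝ≥0∞ :=
  ⨆ (Q : Set (Fin n → ℝ)) (_ : IsCube Q ∧ x ∈ Q), ENNReal.ofReal (avg Q fun y => |f y|)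

/-- The Fujii–Wilson quantity `A_∞(w,Q) = (1/w(Q)) ∫_Q M(w χ_Q)`. -/
def AinfFWr {n : ℕ} (w : (Fin n → ℝ) → ℝ) (Q : Set (Fin n → ℝ)) : ℝ :=
  (∫⁻ x in Q, maxHL (Q.indicator w) x).toReal / ∫ x in Q, w x

/-- The sparse "maximal" operator `M^𝒮 f = ∑_{Q ∈ 𝒮} (⨍_Q f) χ_{E_Q}`. -/
def sparseM {n : ℕ} (𝒮 : Set (Set (Fin n → ℝ))) (f : (Fin n → ℝ) → ℝ)
    (x : Fin n → ℝ) : ℝ≥0∞ :=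
  ∑' Q : 𝒮, Set.indicator (Eset 𝒮 Q.1) (fun _ => ENNReal.ofReal (avg Q.1 f)) x

/-!
The left-hand side is the sum over `Q ∈ 𝒮` of `(⨍_Q χ_R σ)^p w(R ∩ E_Q)`. The cubes that are at
least as large as `R` contribute at most `A_p(w, R) σ(R)` in total. A smaller cube `Q` meeting `R`
need not lie inside `R`, so it is replaced by a companion: the cube `Q' ⊆ R` of the same size
obtained by sliding `Q` into `R`, which contains `Q ∩ R`.

The companions have `1 ≤ A_p(w, Q') ≤ T`, the lower bound by Hölder's inequality, and are sorted
into at most `1 + log T` strata on which `A_p(w, Q')` varies by a factor `e`. In one stratum, the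
term of `Q` is at most `2 A_p(w, Q') (⨍_Q χ_R σ) |E_Q|`. Reflecting the outside of `R` into `R` is
at most `3^n`-to-one and maps `E_Q` into `Q'`, so the terms below a maximal cube `P` add up to at
most `2 · 3^n e A_p(w, P') ∫_{P'} M(χ_{P'} σ) ≤ 2 · 3^n e [σ]^p σ(P')`. The maximal cubes are
disjoint and almost every point of `R` lies in at most `3^n` of their companions, because a face
projection of such a point lies in the cube itself. Hence the stratum contributes at most
`2 · 9^n e [σ]^p σ(R)`.

The definition of `AinfFWr` reads an infinite `∫_Q M(χ_Q σ)` as `0`, so this integral has to be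
shown finite. Since the `A_p` quantity is bounded, `⨍_B σ ≤ c σ` holds on at least half of every
cube `B`; by the Vitali covering lemma the level sets of `M(χ_Q σ)` are then controlled by those
of `c σ`, which is integrable near `Q`.
-/

section Sums

variable {α : Type*}

theorem tsum_subtype_le_of_sum_le {S : Set α} {t : α → ℝ≥0∞} {X : ℝ≥0∞}
    (h : ∀ F : Finset α, ↑F ⊆ S → ∑ i ∈ F, t i ≤ X) : ∑' i : S, t i ≤ X := by
  rw [ENNReal.tsum_eq_iSup_sum]
  refine iSup_le fun F => ?_
  simpa using h (F.map (Function.Embedding.subtype _)) fun x hx => by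
    obtain ⟨y, -, rfl⟩ := Finset.mem_map.1 hx
    exact y.2

open Classical in
theorem sum_le_sum_maximal_sum_le [PartialOrder α] (F : Finset α) (t : α → ℝ≥0∞) :
    ∑ i ∈ F, t i ≤ ∑ j ∈ F with Maximal (· ∈ F) j, ∑ i ∈ F with i ≤ j, t i := by
  calc ∑ i ∈ F, t i
      ≤ ∑ i ∈ F, ∑ j ∈ F with Maximal (· ∈ F) j ∧ i ≤ j, t i := Finset.sum_le_sum fun i hi => by
        obtain ⟨j, hij, hj⟩ := F.exists_le_maximal hi
        exact Finset.single_le_sum (f := fun _ => t i) (fun _ _ => zero_le)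
          (Finset.mem_filter.2 ⟨hj.prop, hj, hij⟩)
    _ = ∑ j ∈ F with Maximal (· ∈ F) j, ∑ i ∈ F with i ≤ j, t i :=
        Finset.sum_comm' fun i j => by simp only [Finset.mem_filter]; tauto

theorem sum_le_one_add_log_mul {F : Finset α} {b t : α → ℝ≥0∞} {T : ℝ} {X : ℝ≥0∞}
    (hT : 1 ≤ T) (hb : ∀ i ∈ F, 1 ≤ b i ∧ b i ≤ ENNReal.ofReal T)
    (h : ∀ G ⊆ F, ∀ β : ℝ≥0∞,
      (∀ i ∈ G, β ≤ b i ∧ b i ≤ ENNReal.ofReal (Real.exp 1) * β) → ∑ i ∈ G, t i ≤ X) :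
    ∑ i ∈ F, t i ≤ ENNReal.ofReal (1 + Real.log T) * X := by
  let level (i : α) : ℕ := ⌊Real.log (b i).toReal⌋₊
  have hlevel : ∀ i ∈ F, level i ∈ Finset.range (⌊Real.log T⌋₊ + 1) := fun i hi => by
    have h1 : (1 : ℝ) ≤ (b i).toReal := by
      simpa using ENNReal.toReal_mono (ne_top_of_le_ne_top ENNReal.ofReal_ne_top (hb i hi).2)
        (hb i hi).1
    have hT' : (b i).toReal ≤ T := ENNReal.toReal_le_of_le_ofReal (by linarith) (hb i hi).2
    exact Finset.mem_range_succ_iff.2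
      (Nat.floor_le_floor (Real.log_le_log (by linarith) hT'))
  have hfiber : ∀ k : ℕ, ∑ i ∈ F with level i = k, t i ≤ X := fun k =>
    h _ (Finset.filter_subset _ _) (ENNReal.ofReal (Real.exp k)) fun i hi => by
      obtain ⟨hiF, rfl⟩ := Finset.mem_filter.1 hi
      have hfin : b i ≠ ⊤ := ne_top_of_le_ne_top ENNReal.ofReal_ne_top (hb i hiF).2
      have h1 : (1 : ℝ) ≤ (b i).toReal := by simpa using ENNReal.toReal_mono hfin (hb i hiF).1
      rw [← ENNReal.ofReal_mul (Real.exp_pos _).le, ← Real.exp_add,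
        ← ENNReal.ofReal_toReal hfin, ← Real.exp_log (show 0 < (b i).toReal by linarith)]
      constructor <;> refine ENNReal.ofReal_le_ofReal (Real.exp_le_exp.2 ?_)
      · exact Nat.floor_le (Real.log_nonneg h1)
      · linarith [Nat.lt_floor_add_one (Real.log (b i).toReal)]
  calc ∑ i ∈ F, t i
      = ∑ k ∈ Finset.range (⌊Real.log T⌋₊ + 1), ∑ i ∈ F with level i = k, t i :=
        (Finset.sum_fiberwise_of_maps_to hlevel t).symm
    _ ≤ ∑ _k ∈ Finset.range (⌊Real.log T⌋₊ + 1), X := Finset.sum_le_sum fun k _ => hfiber k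
    _ = ((⌊Real.log T⌋₊ + 1 : ℕ) : ℝ≥0∞) * X := by simp
    _ ≤ ENNReal.ofReal (1 + Real.log T) * X := by
        gcongr
        rw [← ENNReal.ofReal_natCast]
        refine ENNReal.ofReal_le_ofReal ?_
        push_cast
        linarith [Nat.floor_le (Real.log_nonneg hT)]

theorem tsum_indicator_const_rpow {ι : Type*} {E : ι → Set α}
    (hE : Pairwise (Function.onFun Disjoint E)) (c : ι → ℝ≥0∞) {p : ℝ} (hp : 0 < p) (x : α) :
    (∑' i, (E i).indicator (fun _ => c i) x) ^ p = ∑' i, (E i).indicator (fun _ => c i ^ p) x := by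
  by_cases hx : ∃ i, x ∈ E i
  · obtain ⟨i, hi⟩ := hx
    have hother : ∀ j, j ≠ i → x ∉ E j := fun j hj hxj =>
      Set.disjoint_left.1 (hE hj) hxj hi
    rw [tsum_eq_single i fun j hj => indicator_of_notMem (hother j hj) _,
      tsum_eq_single i fun j hj => indicator_of_notMem (hother j hj) _,
      indicator_of_mem hi, indicator_of_mem hi]
  · have hx : ∀ i, x ∉ E i := not_exists.1 hx
    simp only [indicator_of_notMem (hx _), tsum_zero, ENNReal.zero_rpow_of_pos hp]

end Sums

section Lintegral

variable {α : Type*} [MeasurableSpace α] {μ ν : Measure α} {f g : α → ℝ≥0∞}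

theorem lintegral_le_lintegral_meas_lt (f : α → ℝ≥0∞) :
    ∫⁻ x, f x ∂μ ≤ ∫⁻ t in Ioi (0 : ℝ), μ {x | ENNReal.ofReal t < f x} := by
  rw [lintegral_eq_nnreal]
  refine iSup₂_le fun φ hφ => ?_
  calc (φ.map ((↑) : NNReal → ℝ≥0∞)).lintegral μ
      = ∫⁻ x, ENNReal.ofReal (φ x : ℝ) ∂μ := by
        simp [← SimpleFunc.lintegral_eq_lintegral]
    _ = ∫⁻ t in Ioi (0 : ℝ), μ {x | t < φ x} :=
        lintegral_eq_lintegral_meas_lt μ (Filter.Eventually.of_forall fun x => (φ x).2)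
          φ.measurable.coe_nnreal_real.aemeasurable
    _ ≤ ∫⁻ t in Ioi (0 : ℝ), μ {x | ENNReal.ofReal t < f x} :=
        setLIntegral_mono' measurableSet_Ioi fun t ht => measure_mono fun x hx =>
          ((ENNReal.ofReal_lt_coe_iff (le_of_lt ht)).2 hx).trans_le (hφ x)

theorem lintegral_meas_le_le_lintegral (hg : AEMeasurable g μ) :
    ∫⁻ t in Ioi (0 : ℝ), μ {x | ENNReal.ofReal t ≤ g x} ≤ ∫⁻ x, g x ∂μ := by
  rcases eq_or_ne (∫⁻ x, g x ∂μ) ⊤ with htop | htop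
  · exact htop ▸ le_top
  have hfin : ∀ᵐ x ∂μ, g x < ⊤ := ae_lt_top' hg htop
  calc ∫⁻ t in Ioi (0 : ℝ), μ {x | ENNReal.ofReal t ≤ g x}
      ≤ ∫⁻ t in Ioi (0 : ℝ), μ {x | t ≤ (g x).toReal} := lintegral_mono fun t =>
        measure_mono_ae <| by
          filter_upwards [hfin] with x hx htx using (ENNReal.ofReal_le_iff_le_toReal hx.ne).1 htx
    _ = ∫⁻ x, ENNReal.ofReal (g x).toReal ∂μ := (lintegral_eq_lintegral_meas_le μ
        (Filter.Eventually.of_forall fun _ => ENNReal.toReal_nonneg) hg.ennreal_toReal).symm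
    _ ≤ ∫⁻ x, g x ∂μ := lintegral_mono fun _ => ENNReal.ofReal_toReal_le

theorem lintegral_le_of_meas_lt_le (hg : AEMeasurable g ν) {t₀ : ℝ} {A : ℝ≥0∞} (hA : A ≠ ⊤)
    (h : ∀ t, t₀ < t → μ {x | ENNReal.ofReal t < f x} ≤ A * ν {x | ENNReal.ofReal t ≤ g x}) :
    ∫⁻ x, f x ∂μ ≤ μ univ * ENNReal.ofReal t₀ + A * ∫⁻ x, g x ∂ν := calc
  ∫⁻ x, f x ∂μ ≤ ∫⁻ t in Ioi (0 : ℝ), μ {x | ENNReal.ofReal t < f x} :=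
      lintegral_le_lintegral_meas_lt f
  _ ≤ ∫⁻ t in Ioi (0 : ℝ), ((Iic t₀).indicator (fun _ => μ univ) t +
        A * ν {x | ENNReal.ofReal t ≤ g x}) := lintegral_mono fun t => by
      rcases le_or_gt t t₀ with ht | ht
      · rw [indicator_of_mem (mem_Iic.2 ht)]
        exact (measure_mono (subset_univ _)).trans le_self_add
      · exact (h t ht).trans le_add_self
  _ = μ univ * ENNReal.ofReal t₀ + A * ∫⁻ t in Ioi (0 : ℝ), ν {x | ENNReal.ofReal t ≤ g x} := by
      rw [lintegral_add_left (measurable_const.indicator measurableSet_Iic),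
        lintegral_indicator_const measurableSet_Iic, Measure.restrict_apply measurableSet_Iic,
        Iic_inter_Ioi, Real.volume_Ioc, sub_zero, lintegral_const_mul' _ _ hA]
  _ ≤ μ univ * ENNReal.ofReal t₀ + A * ∫⁻ x, g x ∂ν := by
      gcongr
      exact lintegral_meas_le_le_lintegral hg

end Lintegral

section Duality

variable {α : Type*} [MeasurableSpace α] {P : Measure α} [IsProbabilityMeasure P]
  {f g : α → ℝ≥0∞} {q : ℝ}

theorem one_le_lintegral_rpow_mul_lintegral (hf : AEMeasurable f P) (hg : AEMeasurable g P)
    (hq : 0 ≤ q) (hfg : ∀ x, 1 ≤ f x ^ q * g x) : 1 ≤ (∫⁻ x, f x ∂P) ^ q * ∫⁻ x, g x ∂P := by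
  have hq1 : 0 < q + 1 := by linarith
  have hroot : ∀ a b : ℝ≥0∞, a ^ (q / (q + 1)) * b ^ (1 / (q + 1)) = (a ^ q * b) ^ (1 / (q + 1)) :=
    fun a b => by
      rw [ENNReal.mul_rpow_of_nonneg _ _ (by positivity), ← ENNReal.rpow_mul, mul_one_div]
  have hint : 1 ≤ ((∫⁻ x, f x ∂P) ^ q * ∫⁻ x, g x ∂P) ^ (1 / (q + 1)) := calc
    1 = ∫⁻ _x, 1 ∂P := by simp
    _ ≤ ∫⁻ x, f x ^ (q / (q + 1)) * g x ^ (1 / (q + 1)) ∂P := lintegral_mono fun x => by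
      rw [hroot]
      exact ENNReal.one_le_rpow (hfg x) (by positivity)
    _ ≤ (∫⁻ x, f x ∂P) ^ (q / (q + 1)) * (∫⁻ x, g x ∂P) ^ (1 / (q + 1)) :=
      ENNReal.lintegral_mul_norm_pow_le hf hg (by positivity) (by positivity) (by field_simp)
    _ = _ := hroot _ _
  simpa [hq1.ne'] using ENNReal.rpow_le_rpow hint hq1.le

theorem one_le_two_mul_measure_le_two_mul_lintegral (hg : AEMeasurable g P)
    (hg0 : ∫⁻ x, g x ∂P ≠ 0) : 1 ≤ 2 * P {x | g x ≤ 2 * ∫⁻ x, g x ∂P} := by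
  set m := ∫⁻ x, g x ∂P
  rcases eq_or_ne m ⊤ with htop | htop
  · simp [htop]
  have hmarkov : 2 * P {x | 2 * m ≤ g x} ≤ 1 := by
    have h : 2 * P {x | 2 * m ≤ g x} * m ≤ 1 * m := by
      calc _ = 2 * m * P {x | 2 * m ≤ g x} := by ring
        _ ≤ 1 * m := (mul_meas_ge_le_lintegral₀ hg _).trans_eq (one_mul m).symm
    exact (ENNReal.mul_le_mul_iff_left hg0 htop).1 h
  have hcover : 1 ≤ P {x | g x ≤ 2 * m} + P {x | 2 * m ≤ g x} := calc
    1 = P univ := measure_univ.symm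
    _ ≤ P ({x | g x ≤ 2 * m} ∪ {x | 2 * m ≤ g x}) := measure_mono fun x _ => le_total (g x) (2 * m)
    _ ≤ _ := measure_union_le _ _
  refine (ENNReal.add_le_add_iff_right ENNReal.one_ne_top).1 ?_
  calc (1 : ℝ≥0∞) + 1 = 2 * 1 := by norm_num
    _ ≤ 2 * (P {x | g x ≤ 2 * m} + P {x | 2 * m ≤ g x}) := by gcongr
    _ ≤ 2 * P {x | g x ≤ 2 * m} + 1 := by rw [mul_add]; gcongr

theorem one_le_two_mul_measure_lintegral_le_mul (hg : AEMeasurable g P) (hq : 0 < q)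
    (hfg : ∀ x, 1 ≤ f x ^ q * g x) {T : ℝ≥0∞} (hT : (∫⁻ x, f x ∂P) ^ q * ∫⁻ x, g x ∂P ≤ T) :
    1 ≤ 2 * P {x | ∫⁻ x, f x ∂P ≤ (2 * T) ^ (1 / q) * f x} := by
  have hg0 : ∫⁻ x, g x ∂P ≠ 0 := fun h => by
    obtain ⟨x, hx⟩ := ((lintegral_eq_zero_iff' hg).1 h).exists
    simpa [hx] using hfg x
  refine (one_le_two_mul_measure_le_two_mul_lintegral hg hg0).trans ?_
  gcongr 2 * P ?_
  intro x hx
  have hpow : (∫⁻ x, f x ∂P) ^ q ≤ 2 * T * f x ^ q := calc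
    (∫⁻ x, f x ∂P) ^ q ≤ (∫⁻ x, f x ∂P) ^ q * (f x ^ q * g x) := le_mul_of_one_le_right' (hfg x)
    _ ≤ (∫⁻ x, f x ∂P) ^ q * (f x ^ q * (2 * ∫⁻ x, g x ∂P)) := by gcongr; exact hx
    _ = 2 * ((∫⁻ x, f x ∂P) ^ q * ∫⁻ x, g x ∂P) * f x ^ q := by ring
    _ ≤ 2 * T * f x ^ q := by gcongr
  have hroot : 2 * T * f x ^ q = ((2 * T) ^ (1 / q) * f x) ^ q := by
    rw [ENNReal.mul_rpow_of_nonneg _ _ hq.le, ← ENNReal.rpow_mul, one_div_mul_cancel hq.ne',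
      ENNReal.rpow_one]
  exact (ENNReal.rpow_le_rpow_iff hq).1 (hroot ▸ hpow)

end Duality

section Cubes

variable {n : ℕ} {Q : Set (Fin n → ℝ)}

namespace IsCube

theorem measurableSet (hQ : IsCube Q) : MeasurableSet Q := by
  obtain ⟨a, l, -, rfl⟩ := hQ
  exact measurableSet_Icc

theorem isCompact (hQ : IsCube Q) : IsCompact Q := by
  obtain ⟨a, l, -, rfl⟩ := hQ
  exact isCompact_Icc

theorem volume_ne_top (hQ : IsCube Q) : volume Q ≠ ⊤ :=
  hQ.isCompact.measure_lt_top.ne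

theorem volume_ne_zero (hQ : IsCube Q) : volume Q ≠ 0 := by
  obtain ⟨a, l, hl, rfl⟩ := hQ
  simp [Real.volume_Icc_pi, hl]

end IsCube

theorem isCube_closedBall (x : Fin n → ℝ) {r : ℝ} (hr : 0 < r) :
    IsCube (Metric.closedBall x r) := by
  refine ⟨fun i => x i - r, 2 * r, by positivity, ?_⟩
  rw [closedBall_pi x hr.le, ← pi_univ_Icc]
  refine pi_congr rfl fun i _ => ?_
  rw [Real.closedBall_eq_Icc, Pi.add_apply]
  ring_nf

theorem IsCube.exists_eq_closedBall (hQ : IsCube Q) :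
    ∃ (x : Fin n → ℝ) (r : ℝ), 0 < r ∧ Q = Metric.closedBall x r := by
  obtain ⟨a, l, hl, rfl⟩ := hQ
  refine ⟨fun i => a i + l / 2, l / 2, by positivity, ?_⟩
  rw [closedBall_pi _ (by positivity), ← pi_univ_Icc]
  refine pi_congr rfl fun i _ => ?_
  rw [Real.closedBall_eq_Icc, Pi.add_apply]
  ring_nf

/-- A half-open cube `∏ᵢ [aᵢ, aᵢ + l)` of arbitrary side length `l > 0`; the cubes of a dyadic grid
are of this form. -/
def IsHalfOpenCube (Q : Set (Fin n → ℝ)) : Prop :=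
  ∃ (a : Fin n → ℝ) (l : ℝ), 0 < l ∧ Q = univ.pi fun i => Ico (a i) (a i + l)

namespace IsHalfOpenCube

theorem measurableSet (hQ : IsHalfOpenCube Q) : MeasurableSet Q := by
  obtain ⟨a, l, -, rfl⟩ := hQ
  exact MeasurableSet.univ_pi fun i => measurableSet_Ico

theorem nonempty_interior (hQ : IsHalfOpenCube Q) : (interior Q).Nonempty := by
  obtain ⟨a, l, hl, rfl⟩ := hQ
  rw [interior_pi_set finite_univ]
  exact ⟨fun i => a i + l / 2, by simp [hl]⟩

theorem volume_ne_zero (hQ : IsHalfOpenCube Q) : volume Q ≠ 0 :=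
  (Measure.measure_pos_of_nonempty_interior _ hQ.nonempty_interior).ne'

theorem volume_ne_top (hQ : IsHalfOpenCube Q) : volume Q ≠ ⊤ := by
  obtain ⟨a, l, -, rfl⟩ := hQ
  simp [Real.volume_pi_Ico]

end IsHalfOpenCube

theorem IsDyadicCubeOf.isHalfOpenCube {k : ℤ} (hQ : IsDyadicCubeOf k Q) : IsHalfOpenCube Q :=
  let ⟨a, ha⟩ := hQ
  ⟨a, 2 ^ k, by positivity, ha⟩

end Cubes

section Fold

/-- Reflection of the real line into the interval `[c, d]` across its nearest endpoint. The value
lies in `[c, d]` only for `t` within distance `d - c` of the interval. -/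
def foldIcc (c d t : ℝ) : ℝ :=
  if t < c then 2 * c - t else if d < t then 2 * d - t else t

theorem foldIcc_of_mem {c d t : ℝ} (ht : t ∈ Icc c d) : foldIcc c d t = t := by
  rw [foldIcc, if_neg ht.1.not_gt, if_neg ht.2.not_gt]

theorem measurable_foldIcc (c d : ℝ) : Measurable (foldIcc c d) :=
  Measurable.ite measurableSet_Iio (measurable_const.sub measurable_id)
    (Measurable.ite measurableSet_Ioi (measurable_const.sub measurable_id) measurable_id)

/-- The left endpoint of the translate of `[a, a + l]` by the smallest shift that brings it inside
`[c, c + L]`, for `l ≤ L`. -/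
def shiftInto (c L a l : ℝ) : ℝ :=
  max c (min a (c + L - l))

section ShiftInto

variable {a c l L : ℝ}

theorem Icc_shiftInto_subset (hl : l ≤ L) :
    Icc (shiftInto c L a l) (shiftInto c L a l + l) ⊆ Icc c (c + L) := by
  have hle : shiftInto c L a l ≤ c + L - l := max_le (by linarith) (min_le_right _ _)
  exact Icc_subset_Icc (le_max_left _ _) (by linarith)

theorem foldIcc_mem_Icc_shiftInto (hl : l ≤ L) (hne : (Ico a (a + l) ∩ Icc c (c + L)).Nonempty)
    {t : ℝ} (ht : t ∈ Ico a (a + l)) :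
    foldIcc c (c + L) t ∈ Icc (shiftInto c L a l) (shiftInto c L a l + l) := by
  obtain ⟨y, ⟨hay, hya⟩, hcy, hyc⟩ := hne
  obtain ⟨hat, hta⟩ := ht
  rw [foldIcc, shiftInto]
  rcases max_cases c (min a (c + L - l)) with h | h <;>
  rcases min_cases a (c + L - l) with h' | h' <;>
  split_ifs <;> constructor <;> linarith

theorem mem_Ico_of_mem_Ico_shiftInto (hne : (Ico a (a + l) ∩ Icc c (c + L)).Nonempty) {t : ℝ}
    (ht : t ∈ Ico (shiftInto c L a l) (shiftInto c L a l + l)) :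
    t ∈ Ico a (a + l) ∨ c ∈ Ico a (a + l) ∨ c + L ∈ Ico a (a + l) := by
  obtain ⟨y, ⟨hay, hya⟩, hcy, hyc⟩ := hne
  rcases lt_or_ge a c with hac | hac
  · exact .inr (.inl ⟨hac.le, hcy.trans_lt hya⟩)
  rcases lt_or_ge (c + L - l) a with haL | haL
  · exact .inr (.inr ⟨hay.trans hyc, by linarith⟩)
  · rw [shiftInto, min_eq_left haL, max_eq_right hac] at ht
    exact .inl ht

end ShiftInto

variable {n : ℕ} {c d : Fin n → ℝ}

/-- Coordinatewise reflection into the box `[c, d]`; it carries the part of a cube that sticks out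
of the box to its companion (`IsCompanion`). -/
def fold (c d x : Fin n → ℝ) : Fin n → ℝ :=
  fun i => foldIcc (c i) (d i) (x i)

/-- The reflection that acts on the `i`-th coordinate as the identity, the reflection in `c i` or
the reflection in `d i`, according to `e i`. These are the `3 ^ n` pieces of `fold`. -/
def reflect (c d : Fin n → ℝ) (e : Fin n → Fin 3) (x : Fin n → ℝ) : Fin n → ℝ :=
  fun i => ![x i, 2 * c i - x i, 2 * d i - x i] (e i)

/-- The projection that keeps the `i`-th coordinate or replaces it by `c i` or `d i`, according to
`e i`. It serves to pull disjoint cubes back to disjoint sets that cover their companions. -/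
def faceProj (c d : Fin n → ℝ) (e : Fin n → Fin 3) (x : Fin n → ℝ) : Fin n → ℝ :=
  fun i => ![x i, c i, d i] (e i)

theorem fold_of_mem {x : Fin n → ℝ} (hx : x ∈ Icc c d) : fold c d x = x :=
  funext fun i => foldIcc_of_mem ⟨hx.1 i, hx.2 i⟩

theorem measurable_fold (c d : Fin n → ℝ) : Measurable (fold c d) :=
  measurable_pi_lambda _ fun i => (measurable_foldIcc (c i) (d i)).comp (measurable_pi_apply i)

theorem exists_fold_eq_reflect (c d x : Fin n → ℝ) : ∃ e, fold c d x = reflect c d e x := by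
  have h : ∀ i, ∃ e : Fin 3, fold c d x i = ![x i, 2 * c i - x i, 2 * d i - x i] e := fun i => by
    rw [fold, foldIcc]
    split_ifs
    exacts [⟨1, rfl⟩, ⟨2, rfl⟩, ⟨0, rfl⟩]
  choose e he using h
  exact ⟨e, funext he⟩

theorem reflect_involutive (c d : Fin n → ℝ) (e : Fin n → Fin 3) :
    Function.Involutive (reflect c d e) := fun x => by
  ext i
  simp only [reflect]
  generalize e i = j
  fin_cases j <;> simp

theorem measurePreserving_reflect (c d : Fin n → ℝ) (e : Fin n → Fin 3) :
    MeasurePreserving (reflect c d e) := by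
  refine volume_preserving_pi (f := fun i t => ![t, 2 * c i - t, 2 * d i - t] (e i)) fun i => ?_
  generalize e i = j
  fin_cases j
  exacts [MeasurePreserving.id _, Measure.measurePreserving_sub_left _ _,
    Measure.measurePreserving_sub_left _ _]

theorem measurable_faceProj (c d : Fin n → ℝ) (e : Fin n → Fin 3) :
    Measurable (faceProj c d e) := by
  refine measurable_pi_lambda _ fun i => ?_
  rw [show (fun x => faceProj c d e x i) = fun x => ![x i, c i, d i] (e i) from rfl]
  generalize e i = j
  fin_cases j
  exacts [measurable_pi_apply i, measurable_const, measurable_const]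

theorem setLIntegral_comp_fold_le {A B : Set (Fin n → ℝ)} (hA : MeasurableSet A)
    (hAB : MapsTo (fold c d) A B) (g : (Fin n → ℝ) → ℝ≥0∞) :
    ∫⁻ x in A, g (fold c d x) ≤ 3 ^ n * ∫⁻ x in B, g x := by
  let piece (e : Fin n → Fin 3) : Set (Fin n → ℝ) := A ∩ {x | fold c d x = reflect c d e x}
  have hcover : A ⊆ ⋃ e, piece e := fun x hx =>
    let ⟨e, he⟩ := exists_fold_eq_reflect c d x
    mem_iUnion.2 ⟨e, hx, he⟩
  have hpiece : ∀ e, ∫⁻ x in piece e, g (fold c d x) ≤ ∫⁻ x in B, g x := fun e => by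
    have hmeas : MeasurableSet (piece e) :=
      hA.inter (measurableSet_eq_fun (measurable_fold c d)
        (measurePreserving_reflect c d e).measurable)
    have hemb : MeasurableEmbedding (reflect c d e) :=
      (MeasurableEquiv.ofInvolutive _ (reflect_involutive c d e)
        (measurePreserving_reflect c d e).measurable).measurableEmbedding
    calc ∫⁻ x in piece e, g (fold c d x)
        = ∫⁻ x in piece e, g (reflect c d e x) :=
          setLIntegral_congr_fun hmeas fun x hx => congrArg g hx.2
      _ ≤ ∫⁻ x in reflect c d e ⁻¹' B, g (reflect c d e x) :=
          lintegral_mono_set fun x hx => by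
            rw [mem_preimage, ← hx.2]
            exact hAB hx.1
      _ = ∫⁻ x in B, g x :=
          (measurePreserving_reflect c d e).setLIntegral_comp_preimage_emb hemb g B
  calc ∫⁻ x in A, g (fold c d x)
      ≤ ∑' e, ∫⁻ x in piece e, g (fold c d x) :=
        (lintegral_mono_set hcover).trans (lintegral_iUnion_le _ _)
    _ ≤ ∑' _e : Fin n → Fin 3, ∫⁻ x in B, g x := ENNReal.tsum_le_tsum hpiece
    _ = 3 ^ n * ∫⁻ x in B, g x := by simp [tsum_fintype]

end Fold

section Companion

variable {n : ℕ} {c d : Fin n → ℝ} {Q Q' : Set (Fin n → ℝ)}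

/-- `Q'` is a companion of the cube `Q` in the box `[c, d]`: a closed cube inside the box, of the
same volume as `Q` and large enough to contain the folded `Q`, yet covered up to a null set by the
preimages of `Q` under the face projections. It replaces `Q ∩ [c, d]`, which need not be a cube. -/
structure IsCompanion (c d : Fin n → ℝ) (Q Q' : Set (Fin n → ℝ)) : Prop where
  isCube : IsCube Q'
  subset_Icc : Q' ⊆ Icc c d
  volume_eq : volume Q' = volume Q
  mapsTo_fold : MapsTo (fold c d) Q Q'
  ae_subset : Q' ≤ᵐ[volume] ⋃ e, faceProj c d e ⁻¹' Q

theorem IsCompanion.inter_subset (h : IsCompanion c d Q Q') : Q ∩ Icc c d ⊆ Q' := fun _ hx =>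
  fold_of_mem hx.2 ▸ h.mapsTo_fold hx.1

theorem isCompanion_shiftInto {a : Fin n → ℝ} {l L : ℝ} (hl0 : 0 < l) (hl : l ≤ L)
    (hne : ∀ i, (Ico (a i) (a i + l) ∩ Icc (c i) (c i + L)).Nonempty) :
    IsCompanion c (c + fun _ => L) (univ.pi fun i => Ico (a i) (a i + l))
      (Icc (fun i => shiftInto (c i) L (a i) l) ((fun i => shiftInto (c i) L (a i) l) + fun _ => l))
    where
  isCube := ⟨_, l, hl0, rfl⟩
  subset_Icc := by
    rw [← pi_univ_Icc, ← pi_univ_Icc]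
    exact pi_mono fun i _ => Icc_shiftInto_subset hl
  volume_eq := by simp [Real.volume_Icc_pi, Real.volume_pi_Ico]
  mapsTo_fold := fun x hx => by
    rw [← pi_univ_Icc]
    exact fun i _ => foldIcc_mem_Icc_shiftInto hl (hne i) (hx i trivial)
  ae_subset := by
    refine (Measure.univ_pi_Ico_ae_eq_Icc (μ := fun _ => volume)).symm.le.trans
      (LE.le.eventuallyLE fun y hy => ?_)
    have hface : ∀ i, ∃ e : Fin 3, ![y i, c i, c i + L] e ∈ Ico (a i) (a i + l) :=
      fun i => by
        rcases mem_Ico_of_mem_Ico_shiftInto (hne i) (hy i trivial) with h | h | h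
        exacts [⟨0, h⟩, ⟨1, h⟩, ⟨2, h⟩]
    choose e he using hface
    exact mem_iUnion.2 ⟨e, fun i _ => he i⟩

theorem IsHalfOpenCube.exists_isCompanion (hQ : IsHalfOpenCube Q) {L : ℝ}
    (hvol : volume Q < volume (Icc c (c + fun _ => L)))
    (hne : (Q ∩ Icc c (c + fun _ => L)).Nonempty) :
    ∃ Q', IsCompanion c (c + fun _ => L) Q Q' := by
  obtain ⟨a, l, hl0, rfl⟩ := hQ
  have hlL : l ≤ L := by
    by_contra! hLl
    refine hvol.not_ge ?_
    simp only [Real.volume_Icc_pi, Real.volume_pi_Ico, Pi.add_apply, add_sub_cancel_left]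
    gcongr
  obtain ⟨y, hy, hyR⟩ := hne
  exact ⟨_, isCompanion_shiftInto hl0 hlL fun i => ⟨y i, hy i trivial, hyR.1 i, hyR.2 i⟩⟩

end Companion

section Density

variable {n : ℕ} {μ : Measure (Fin n → ℝ)} {Q R : Set (Fin n → ℝ)} {p : ℝ}

/-- The average density `μ(Q) / |Q|` of a measure on `Q`; for `μ = f dx` it is `⨍_Q f`. -/
def density (μ : Measure (Fin n → ℝ)) (Q : Set (Fin n → ℝ)) : ℝ≥0∞ :=
  μ Q / volume Q

/-- The Hardy–Littlewood maximal function of a measure, over closed cubes containing `x`. -/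
def maximalFun (μ : Measure (Fin n → ℝ)) (x : Fin n → ℝ) : ℝ≥0∞ :=
  ⨆ (Q : Set (Fin n → ℝ)) (_ : IsCube Q ∧ x ∈ Q), density μ Q

/-- The `A_p` quantity of a pair of measures, `(σ(Q) / |Q|)^(p-1) (w(Q) / |Q|)`; for dual weights it
is `A_{p'}(σ, Q)^(p-1) = A_p(w, Q)`. -/
def apDensity (p : ℝ) (σ w : Measure (Fin n → ℝ)) (Q : Set (Fin n → ℝ)) : ℝ≥0∞ :=
  density σ Q ^ (p - 1) * density w Q

theorem density_mul_volume (hQ : IsCube Q) : density μ Q * volume Q = μ Q :=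
  ENNReal.div_mul_cancel hQ.volume_ne_zero hQ.volume_ne_top

theorem density_restrict_le (μ : Measure (Fin n → ℝ)) (R Q : Set (Fin n → ℝ)) :
    density (μ.restrict R) Q ≤ density μ Q :=
  ENNReal.div_le_div_right (Measure.restrict_apply_le _ _) _

theorem density_restrict_self (μ : Measure (Fin n → ℝ)) (Q : Set (Fin n → ℝ)) :
    density (μ.restrict Q) Q = density μ Q := by
  rw [density, density, Measure.restrict_apply_self]

theorem density_restrict_le_of_volume_le (hQ : MeasurableSet Q)
    (h : volume R ≤ volume Q ∨ Disjoint Q R) : density (μ.restrict R) Q ≤ density μ R := by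
  rw [density, Measure.restrict_apply hQ, density]
  rcases h with h | h
  · exact ENNReal.div_le_div (measure_mono inter_subset_right) h
  · simp [h.inter_eq]

theorem density_le_maximalFun (hQ : IsCube Q) {x : Fin n → ℝ} (hx : x ∈ Q) :
    density μ Q ≤ maximalFun μ x :=
  le_iSup₂ (f := fun (Q : Set (Fin n → ℝ)) (_ : IsCube Q ∧ x ∈ Q) => density μ Q) Q ⟨hQ, hx⟩

theorem measure_le_setLIntegral_maximalFun (hQ : IsCube Q) :
    μ Q ≤ ∫⁻ x in Q, maximalFun (μ.restrict Q) x := by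
  rw [← density_mul_volume hQ, ← density_restrict_self, ← setLIntegral_const]
  exact setLIntegral_mono' hQ.measurableSet fun x hx => density_le_maximalFun hQ hx

theorem density_rpow_eq_mul (hp : 1 ≤ p) (μ : Measure (Fin n → ℝ)) (Q : Set (Fin n → ℝ)) :
    density μ Q ^ p = density μ Q ^ (p - 1) * density μ Q := by
  conv_rhs => rw [← ENNReal.rpow_one (density μ Q), ← ENNReal.rpow_mul]
  rw [one_mul, ← ENNReal.rpow_add_of_nonneg _ _ (by linarith) one_pos.le, sub_add_cancel]

theorem density_rpow_mul_measure (hp : 1 ≤ p) (σ w : Measure (Fin n → ℝ)) (Q : Set (Fin n → ℝ)) :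
    density σ Q ^ p * w Q = apDensity p σ w Q * σ Q := by
  rw [density_rpow_eq_mul hp, apDensity, density, density]
  simp only [div_eq_mul_inv]
  ring

end Density

section CompanionSums

variable {n : ℕ} {c d : Fin n → ℝ} {σ w : Measure (Fin n → ℝ)} {E P P' Q Q' : Set (Fin n → ℝ)}
  {p : ℝ}

namespace IsCompanion

theorem density_restrict_le (h : IsCompanion c d Q Q') (hQ : MeasurableSet Q)
    (hP : Q ∩ Icc c d ⊆ P) : density (σ.restrict (Icc c d)) Q ≤ density (σ.restrict P) Q' := by
  rw [density, density, h.volume_eq, Measure.restrict_apply hQ,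
    Measure.restrict_apply h.isCube.measurableSet]
  exact ENNReal.div_le_div_right (measure_mono (subset_inter h.inter_subset hP)) _

theorem density_rpow_mul_measure_le (h : IsCompanion c d Q Q') (hQ : MeasurableSet Q)
    (hp : 1 ≤ p) (hEQ : E ⊆ Q) (hE : MeasurableSet E) (hvol : volume Q ≤ 2 * volume E) :
    density (σ.restrict (Icc c d)) Q ^ p * w.restrict (Icc c d) E ≤
      apDensity p σ w Q' * (2 * (density (σ.restrict (Icc c d)) Q * volume E)) := by
  have hσ : density (σ.restrict (Icc c d)) Q ≤ density σ Q' :=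
    (h.density_restrict_le hQ h.inter_subset).trans (_root_.density_restrict_le _ _ _)
  have hw : w.restrict (Icc c d) E ≤ density w Q' * (2 * volume E) := calc
    w.restrict (Icc c d) E ≤ w Q' := by
      rw [Measure.restrict_apply hE]
      exact measure_mono ((inter_subset_inter_left _ hEQ).trans h.inter_subset)
    _ = density w Q' * volume Q := by rw [← h.volume_eq, density_mul_volume h.isCube]
    _ ≤ density w Q' * (2 * volume E) := by gcongr
  rw [density_rpow_eq_mul hp]
  calc _ ≤ density σ Q' ^ (p - 1) * density (σ.restrict (Icc c d)) Q *
        (density w Q' * (2 * volume E)) := by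
        have : 0 ≤ p - 1 := by linarith
        gcongr
    _ = _ := by rw [apDensity]; ring

theorem sum_density_mul_volume_le (hP : IsCompanion c d P P') (hPm : MeasurableSet P)
    {F : Finset (Set (Fin n → ℝ))} {E φ : Set (Fin n → ℝ) → Set (Fin n → ℝ)}
    (hF : ∀ Q ∈ F, Q ⊆ P ∧ MeasurableSet Q ∧ IsCompanion c d Q (φ Q))
    (hE : ∀ Q ∈ F, E Q ⊆ Q ∧ MeasurableSet (E Q)) (hdisj : (F : Set _).PairwiseDisjoint E) :
    ∑ Q ∈ F, density (σ.restrict (Icc c d)) Q * volume (E Q) ≤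
      3 ^ n * ∫⁻ x in P', maximalFun (σ.restrict P') x := by
  have hpoint : ∀ Q ∈ F, ∀ x ∈ E Q, density (σ.restrict (Icc c d)) Q ≤
      maximalFun (σ.restrict P') (fold c d x) := fun Q hQ x hx =>
    let ⟨hQP, hQm, hφ⟩ := hF Q hQ
    (hφ.density_restrict_le hQm ((inter_subset_inter_left _ hQP).trans hP.inter_subset)).trans
      (density_le_maximalFun hφ.isCube (hφ.mapsTo_fold ((hE Q hQ).1 hx)))
  calc ∑ Q ∈ F, density (σ.restrict (Icc c d)) Q * volume (E Q)
      ≤ ∑ Q ∈ F, ∫⁻ x in E Q, maximalFun (σ.restrict P') (fold c d x) :=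
        Finset.sum_le_sum fun Q hQ => by
          rw [← setLIntegral_const]
          exact setLIntegral_mono' (hE Q hQ).2 (hpoint Q hQ)
    _ = ∫⁻ x in ⋃ Q ∈ F, E Q, maximalFun (σ.restrict P') (fold c d x) :=
        (lintegral_biUnion_finset hdisj (fun Q hQ => (hE Q hQ).2) _).symm
    _ ≤ ∫⁻ x in P, maximalFun (σ.restrict P') (fold c d x) :=
        lintegral_mono_set (iUnion₂_subset fun Q hQ => (hE Q hQ).1.trans (hF Q hQ).1)
    _ ≤ 3 ^ n * ∫⁻ x in P', maximalFun (σ.restrict P') x :=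
        setLIntegral_comp_fold_le hPm hP.mapsTo_fold _

theorem measure_le_sum (h : IsCompanion c d Q Q') (hσ : σ ≪ volume) :
    σ Q' ≤ ∑ e, σ (faceProj c d e ⁻¹' Q ∩ Icc c d) := calc
  σ Q' ≤ σ ((⋃ e, faceProj c d e ⁻¹' Q) ∩ Icc c d) :=
      measure_mono_ae <| by
        filter_upwards [hσ.ae_le h.ae_subset] with x hx hxQ using ⟨hx hxQ, h.subset_Icc hxQ⟩
  _ ≤ ∑ e, σ (faceProj c d e ⁻¹' Q ∩ Icc c d) := by
      rw [iUnion_inter]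
      exact measure_iUnion_fintype_le _ _

end IsCompanion

theorem sum_measure_companion_le (hσ : σ ≪ volume) {F : Finset (Set (Fin n → ℝ))}
    {φ : Set (Fin n → ℝ) → Set (Fin n → ℝ)}
    (hF : ∀ Q ∈ F, MeasurableSet Q ∧ IsCompanion c d Q (φ Q))
    (hdisj : (F : Set (Set (Fin n → ℝ))).PairwiseDisjoint id) :
    ∑ Q ∈ F, σ (φ Q) ≤ 3 ^ n * σ (Icc c d) := by
  have hface : ∀ e, ∑ Q ∈ F, σ (faceProj c d e ⁻¹' Q ∩ Icc c d) ≤ σ (Icc c d) := fun e => by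
    have hdisj' : (F : Set (Set (Fin n → ℝ))).PairwiseDisjoint
        fun Q => faceProj c d e ⁻¹' Q ∩ Icc c d := fun Q hQ P hP hQP =>
      ((hdisj hQ hP hQP).preimage _).mono inter_subset_left inter_subset_left
    rw [← measure_biUnion_finset hdisj' fun Q hQ =>
      (measurable_faceProj c d e (hF Q hQ).1).inter measurableSet_Icc]
    exact measure_mono (iUnion₂_subset fun _ _ => inter_subset_right)
  calc ∑ Q ∈ F, σ (φ Q)
      ≤ ∑ Q ∈ F, ∑ e, σ (faceProj c d e ⁻¹' Q ∩ Icc c d) :=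
        Finset.sum_le_sum fun Q hQ => (hF Q hQ).2.measure_le_sum hσ
    _ = ∑ e, ∑ Q ∈ F, σ (faceProj c d e ⁻¹' Q ∩ Icc c d) := Finset.sum_comm
    _ ≤ ∑ _e : Fin n → Fin 3, σ (Icc c d) := Finset.sum_le_sum fun e _ => hface e
    _ = 3 ^ n * σ (Icc c d) := by simp

end CompanionSums

section Sparse

variable {n : ℕ} {𝒮 : Set (Set (Fin n → ℝ))} {E : Set (Fin n → ℝ) → Set (Fin n → ℝ)}

/-- A laminar family: any two members are nested or disjoint, as in a dyadic grid. -/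
def IsLaminar (𝒮 : Set (Set (Fin n → ℝ))) : Prop :=
  ∀ Q ∈ 𝒮, ∀ P ∈ 𝒮, Q ⊆ P ∨ P ⊆ Q ∨ Disjoint Q P

/-- The family `𝒮` is sparse with major subsets `E Q`: these are pairwise disjoint and fill at least
half of each `Q ∈ 𝒮`. The values of `E` outside `𝒮` are arbitrary. -/
structure IsSparseWith (𝒮 : Set (Set (Fin n → ℝ))) (E : Set (Fin n → ℝ) → Set (Fin n → ℝ)) :
    Prop where
  subset : ∀ Q ∈ 𝒮, E Q ⊆ Q
  measurableSet : ∀ Q ∈ 𝒮, MeasurableSet (E Q)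
  pairwiseDisjoint : 𝒮.PairwiseDisjoint E
  volume_le : ∀ Q ∈ 𝒮, volume Q ≤ 2 * volume (E Q)

/-- The sparse operator `∑_{Q ∈ 𝒮} (μ(Q) / |Q|) χ_{E Q}` of a measure, for arbitrary sets `E Q`. -/
def sparseOp (𝒮 : Set (Set (Fin n → ℝ))) (E : Set (Fin n → ℝ) → Set (Fin n → ℝ))
    (μ : Measure (Fin n → ℝ)) (x : Fin n → ℝ) : ℝ≥0∞ :=
  ∑' Q : 𝒮, (E Q).indicator (fun _ => density μ Q) x

theorem IsSparseWith.countable (h : IsSparseWith 𝒮 E) (h0 : ∀ Q ∈ 𝒮, volume Q ≠ 0) :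
    𝒮.Countable := by
  have hc : {Q : 𝒮 | 0 < volume (E Q)}.Countable :=
    Measure.countable_meas_pos_of_disjoint_iUnion (fun Q => h.measurableSet Q Q.2)
      fun Q P hQP => h.pairwiseDisjoint Q.2 P.2 (Subtype.coe_ne_coe.2 hQP)
  have hpos : ∀ Q : 𝒮, 0 < volume (E Q) := fun Q => by
    refine pos_iff_ne_zero.2 fun hE => h0 Q Q.2 ?_
    simpa only [hE, mul_zero, nonpos_iff_eq_zero] using h.volume_le Q Q.2
  simpa only [hpos, ofPred_true, countable_univ_iff, countable_coe_iff] using hc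

theorem IsSparseWith.lintegral_sparseOp_rpow (h : IsSparseWith 𝒮 E) (hc : 𝒮.Countable) {p : ℝ}
    (hp : 0 < p) (μ ν : Measure (Fin n → ℝ)) :
    ∫⁻ x, sparseOp 𝒮 E μ x ^ p ∂ν = ∑' Q : 𝒮, density μ Q ^ p * ν (E Q) := by
  have := hc.to_subtype
  have hdisj : Pairwise (Function.onFun Disjoint fun Q : 𝒮 => E Q) := fun Q P hQP =>
    h.pairwiseDisjoint Q.2 P.2 (Subtype.coe_ne_coe.2 hQP)
  simp only [sparseOp, tsum_indicator_const_rpow hdisj _ hp]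
  rw [lintegral_tsum fun Q : 𝒮 =>
    (measurable_const.indicator (h.measurableSet Q Q.2)).aemeasurable]
  simp only [lintegral_indicator_const (h.measurableSet _ (Subtype.coe_prop _))]

variable {p : ℝ} {c d : Fin n → ℝ} {σ w : Measure (Fin n → ℝ)}

theorem IsSparseWith.sum_subset_le (h : IsSparseWith 𝒮 E) (hp : 1 ≤ p)
    {F : Finset (Set (Fin n → ℝ))} (hF : ↑F ⊆ 𝒮) {P P' : Set (Fin n → ℝ)}
    (hP : IsCompanion c d P P') (hPm : MeasurableSet P)
    {φ : Set (Fin n → ℝ) → Set (Fin n → ℝ)} {A : ℝ≥0∞}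
    (hφ : ∀ Q ∈ F, Q ⊆ P ∧ MeasurableSet Q ∧ IsCompanion c d Q (φ Q) ∧
      apDensity p σ w (φ Q) ≤ A) :
    ∑ Q ∈ F, density (σ.restrict (Icc c d)) Q ^ p * w.restrict (Icc c d) (E Q) ≤
      A * (2 * (3 ^ n * ∫⁻ x in P', maximalFun (σ.restrict P') x)) := by
  set D := density (σ.restrict (Icc c d))
  have hE : ∀ Q ∈ F, E Q ⊆ Q ∧ MeasurableSet (E Q) := fun Q hQ =>
    ⟨h.subset Q (hF hQ), h.measurableSet Q (hF hQ)⟩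
  have hpack : ∑ Q ∈ F, D Q * volume (E Q) ≤
      3 ^ n * ∫⁻ x in P', maximalFun (σ.restrict P') x :=
    hP.sum_density_mul_volume_le hPm
      (fun Q hQ => have ⟨hQP, hQm, hQφ, _⟩ := hφ Q hQ; ⟨hQP, hQm, hQφ⟩) hE
      (h.pairwiseDisjoint.subset hF)
  calc ∑ Q ∈ F, D Q ^ p * w.restrict (Icc c d) (E Q)
      ≤ ∑ Q ∈ F, A * (2 * (D Q * volume (E Q))) := Finset.sum_le_sum fun Q hQ => by
        obtain ⟨-, hQm, hQφ, hQA⟩ := hφ Q hQ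
        exact (hQφ.density_rpow_mul_measure_le hQm hp (hE Q hQ).1 (hE Q hQ).2
          (h.volume_le Q (hF hQ))).trans (mul_le_mul_left hQA _)
    _ = A * (2 * ∑ Q ∈ F, D Q * volume (E Q)) := by rw [Finset.mul_sum, Finset.mul_sum]
    _ ≤ _ := by gcongr

theorem IsSparseWith.sum_stratum_le (h : IsSparseWith 𝒮 E) (hlam : IsLaminar 𝒮) (hp : 1 ≤ p)
    (hσ : σ ≪ volume) {K : ℝ≥0∞}
    (hK : ∀ Q, IsCube Q → apDensity p σ w Q * ∫⁻ x in Q, maximalFun (σ.restrict Q) x ≤ K * σ Q)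
    {F : Finset (Set (Fin n → ℝ))} (hF : ↑F ⊆ 𝒮) {φ : Set (Fin n → ℝ) → Set (Fin n → ℝ)}
    (hφ : ∀ Q ∈ F, MeasurableSet Q ∧ IsCompanion c d Q (φ Q)) {θ β : ℝ≥0∞}
    (hβ : ∀ Q ∈ F, β ≤ apDensity p σ w (φ Q) ∧ apDensity p σ w (φ Q) ≤ θ * β) :
    ∑ Q ∈ F, density (σ.restrict (Icc c d)) Q ^ p * w.restrict (Icc c d) (E Q) ≤
      2 * 9 ^ n * θ * K * σ (Icc c d) := by
  classical
  have hmax : ∀ P ∈ F,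
      ∑ Q ∈ F with Q ≤ P, density (σ.restrict (Icc c d)) Q ^ p * w.restrict (Icc c d) (E Q) ≤
        2 * 3 ^ n * θ * K * σ (φ P) := fun P hP => calc
    _ ≤ θ * β * (2 * (3 ^ n * ∫⁻ x in φ P, maximalFun (σ.restrict (φ P)) x)) :=
        h.sum_subset_le hp (fun Q hQ => hF (Finset.mem_filter.1 hQ).1) (hφ P hP).2 (hφ P hP).1
          fun Q hQ => have ⟨hQF, hQP⟩ := Finset.mem_filter.1 hQ
            ⟨hQP, (hφ Q hQF).1, (hφ Q hQF).2, (hβ Q hQF).2⟩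
    _ = 2 * 3 ^ n * θ * (β * ∫⁻ x in φ P, maximalFun (σ.restrict (φ P)) x) := by ring
    _ ≤ 2 * 3 ^ n * θ * (K * σ (φ P)) := by
        exact mul_le_mul_right
          ((mul_le_mul_left (hβ P hP).1 _).trans (hK _ (hφ P hP).2.isCube)) _
    _ = 2 * 3 ^ n * θ * K * σ (φ P) := by ring
  have hdisj : (SetLike.coe {P ∈ F | Maximal (· ∈ F) P}).PairwiseDisjoint id := by
    intro P hP Q hQ hPQ
    obtain ⟨hPF, hP⟩ := Finset.mem_filter.1 hP
    obtain ⟨hQF, hQ⟩ := Finset.mem_filter.1 hQ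
    rcases hlam P (hF hPF) Q (hF hQF) with hle | hle | hd
    exacts [(hPQ (hP.eq_of_le hQF hle)).elim, (hPQ (hQ.eq_of_le hPF hle).symm).elim, hd]
  calc _ ≤ ∑ P ∈ F with Maximal (· ∈ F) P, ∑ Q ∈ F with Q ≤ P,
        density (σ.restrict (Icc c d)) Q ^ p * w.restrict (Icc c d) (E Q) :=
        sum_le_sum_maximal_sum_le F _
    _ ≤ ∑ P ∈ F with Maximal (· ∈ F) P, 2 * 3 ^ n * θ * K * σ (φ P) :=
        Finset.sum_le_sum fun P hP => hmax P (Finset.mem_filter.1 hP).1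
    _ ≤ 2 * 3 ^ n * θ * K * (3 ^ n * σ (Icc c d)) := by
        rw [← Finset.mul_sum]
        gcongr
        exact sum_measure_companion_le hσ (fun Q hQ => hφ Q (Finset.mem_filter.1 hQ).1) hdisj
    _ = 2 * 9 ^ n * θ * K * σ (Icc c d) := by
        rw [show (9 : ℝ≥0∞) = 3 * 3 by norm_num, mul_pow]
        ring

theorem IsSparseWith.sum_large_le (h : IsSparseWith 𝒮 E) (hp : 1 ≤ p) {R : Set (Fin n → ℝ)}
    {F : Finset (Set (Fin n → ℝ))} (hF : ↑F ⊆ 𝒮)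
    (hlarge : ∀ Q ∈ F, MeasurableSet Q ∧ (volume R ≤ volume Q ∨ Disjoint Q R)) :
    ∑ Q ∈ F, density (σ.restrict R) Q ^ p * w.restrict R (E Q) ≤ apDensity p σ w R * σ R := calc
  _ ≤ ∑ Q ∈ F, density σ R ^ p * w.restrict R (E Q) := Finset.sum_le_sum fun Q hQ => by
      gcongr
      exact density_restrict_le_of_volume_le (hlarge Q hQ).1 (hlarge Q hQ).2
  _ = density σ R ^ p * w.restrict R (⋃ Q ∈ F, E Q) := by
      rw [← Finset.mul_sum, measure_biUnion_finset (h.pairwiseDisjoint.subset hF)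
        fun Q hQ => h.measurableSet Q (hF hQ)]
  _ ≤ density σ R ^ p * w R := by
      exact mul_le_mul_right
        ((measure_mono (subset_univ _)).trans_eq (Measure.restrict_apply_univ R)) _
  _ = apDensity p σ w R * σ R := density_rpow_mul_measure hp σ w R

theorem IsSparseWith.sum_companion_le (h : IsSparseWith 𝒮 E) (hlam : IsLaminar 𝒮) (hp : 1 ≤ p)
    (hσ : σ ≪ volume) {T : ℝ} (hT1 : 1 ≤ T) {K : ℝ≥0∞}
    (hT : ∀ Q, IsCube Q → 1 ≤ apDensity p σ w Q ∧ apDensity p σ w Q ≤ ENNReal.ofReal T)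
    (hK : ∀ Q, IsCube Q → apDensity p σ w Q * ∫⁻ x in Q, maximalFun (σ.restrict Q) x ≤ K * σ Q)
    {F : Finset (Set (Fin n → ℝ))} (hF : ↑F ⊆ 𝒮)
    (hcomp : ∀ Q ∈ F, MeasurableSet Q ∧ ∃ Q', IsCompanion c d Q Q') :
    ∑ Q ∈ F, density (σ.restrict (Icc c d)) Q ^ p * w.restrict (Icc c d) (E Q) ≤
      ENNReal.ofReal (1 + Real.log T) *
        (2 * 9 ^ n * ENNReal.ofReal (Real.exp 1) * K * σ (Icc c d)) := by
  choose! hm φ hφ using hcomp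
  exact sum_le_one_add_log_mul hT1 (fun Q hQ => hT _ (hφ Q hQ).isCube) fun G hG β hβ =>
    h.sum_stratum_le hlam hp hσ hK (fun Q hQ => hF (hG hQ))
      (fun Q hQ => ⟨hm Q (hG hQ), hφ Q (hG hQ)⟩) hβ

theorem IsSparseWith.setLIntegral_sparseOp_rpow_le (h : IsSparseWith 𝒮 E) (hlam : IsLaminar 𝒮)
    (hcube : ∀ Q ∈ 𝒮, IsHalfOpenCube Q) (hp : 1 ≤ p) (hσ : σ ≪ volume) {T : ℝ} {K : ℝ≥0∞}
    (hT : ∀ Q, IsCube Q → 1 ≤ apDensity p σ w Q ∧ apDensity p σ w Q ≤ ENNReal.ofReal T)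
    (hK : ∀ Q, IsCube Q → apDensity p σ w Q * ∫⁻ x in Q, maximalFun (σ.restrict Q) x ≤ K * σ Q)
    {R : Set (Fin n → ℝ)} (hR : IsCube R) :
    ∫⁻ x in R, sparseOp 𝒮 E (σ.restrict R) x ^ p ∂w ≤
      ENNReal.ofReal ((2 * 9 ^ n * Real.exp 1 + 1) * (1 + Real.log T)) * K * σ R := by
  classical
  have hT1 : 1 ≤ T := ENNReal.one_le_ofReal.1 ((hT R hR).1.trans (hT R hR).2)
  have hlog : 0 ≤ Real.log T := Real.log_nonneg hT1
  obtain ⟨c, L, -, hRc⟩ := id hR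
  rw [h.lintegral_sparseOp_rpow (h.countable fun Q hQ => (hcube Q hQ).volume_ne_zero)
    (zero_lt_one.trans_le hp)]
  refine tsum_subtype_le_of_sum_le
    (t := fun Q => density (σ.restrict R) Q ^ p * w.restrict R (E Q)) fun F hF => ?_
  have hm : ∀ Q ∈ F, MeasurableSet Q := fun Q hQ => (hcube Q (hF hQ)).measurableSet
  let small (Q : Set (Fin n → ℝ)) : Prop := ∃ Q', IsCompanion c (c + fun _ => L) Q Q'
  have hlarge : ∀ Q ∈ F, ¬ small Q → volume R ≤ volume Q ∨ Disjoint Q R := fun Q hQ hsmall => by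
    contrapose! hsmall
    rw [hRc] at hsmall
    exact (hcube Q (hF hQ)).exists_isCompanion hsmall.1 (not_disjoint_iff_nonempty_inter.1 hsmall.2)
  rw [← Finset.sum_filter_add_sum_filter_not F small]
  calc _ ≤ ENNReal.ofReal (1 + Real.log T) *
          (2 * 9 ^ n * ENNReal.ofReal (Real.exp 1) * K * σ R) + apDensity p σ w R * σ R := by
        refine add_le_add ?_ (h.sum_large_le hp (fun Q hQ => hF (Finset.mem_filter.1 hQ).1)
          fun Q hQ => have ⟨hQF, hQ⟩ := Finset.mem_filter.1 hQ; ⟨hm Q hQF, hlarge Q hQF hQ⟩)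
        rw [hRc]
        exact h.sum_companion_le hlam hp hσ hT1 hT hK (fun Q hQ => hF (Finset.mem_filter.1 hQ).1)
          fun Q hQ => have ⟨hQF, hQ⟩ := Finset.mem_filter.1 hQ; ⟨hm Q hQF, hQ⟩
    _ ≤ ENNReal.ofReal (1 + Real.log T) *
          (2 * 9 ^ n * ENNReal.ofReal (Real.exp 1) * K * σ R) +
          ENNReal.ofReal (1 + Real.log T) * (K * σ R) := by
        refine add_le_add_right (((mul_le_mul_right (measure_le_setLIntegral_maximalFun hR) _).trans
          (hK R hR)).trans (le_mul_of_one_le_left' ?_)) _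
        exact ENNReal.one_le_ofReal.2 (by linarith)
    _ = _ := by
        rw [ENNReal.ofReal_mul (by positivity), ENNReal.ofReal_add (by positivity) one_pos.le,
          ENNReal.ofReal_mul (by positivity), ENNReal.ofReal_mul two_pos.le,
          ENNReal.ofReal_pow (by positivity), ENNReal.ofReal_ofNat, ENNReal.ofReal_ofNat,
          ENNReal.ofReal_one]
        ring

end Sparse

section Eset

variable {n : ℕ} {𝒮 : Set (Set (Fin n → ℝ))} {Q P : Set (Fin n → ℝ)}

theorem volume_le_half_of_ssubset (h𝒮 : IsSparse 𝒮) (hQ : Q ∈ 𝒮) (hP : P ∈ 𝒮) (hQP : Q ⊂ P) :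
    volume Q ≤ volume P / 2 :=
  (measure_mono (subset_iUnion₂ (s := fun Q' _ => Q') Q ⟨hQ, hQP⟩)).trans (h𝒮 P hP)

theorem IsSparse.countable (h𝒮 : IsSparse 𝒮) (hlam : IsLaminar 𝒮)
    (hcube : ∀ Q ∈ 𝒮, IsHalfOpenCube Q) : 𝒮.Countable := by
  let scale (k : ℤ) : Set (Set (Fin n → ℝ)) :=
    {Q ∈ 𝒮 | volume Q ∈ Ico ((2 : ℝ≥0∞) ^ k) (2 ^ (k + 1))}
  have hnot : ∀ k, ∀ Q ∈ scale k, ∀ P ∈ scale k, ¬ Q ⊂ P := fun k Q hQ P hP hQP => by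
    have hlt : volume P / 2 < 2 ^ k := by
      refine ENNReal.div_lt_of_lt_mul ?_
      simpa only [ENNReal.zpow_add two_ne_zero ENNReal.ofNat_ne_top, zpow_one] using hP.2.2
    exact (hQ.2.1.trans (volume_le_half_of_ssubset h𝒮 hQ.1 hP.1 hQP)).not_gt hlt
  have hscale : ∀ k, (scale k).Countable := fun k => by
    refine PairwiseDisjoint.countable_of_nonempty_interior (s := id) (fun Q hQ P hP hne => ?_)
      fun Q hQ => (hcube Q hQ.1).nonempty_interior
    rcases hlam Q hQ.1 P hP.1 with h | h | h
    · exact (hnot k Q hQ P hP (h.ssubset_of_ne hne)).elim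
    · exact (hnot k P hP Q hQ (h.ssubset_of_ne hne.symm)).elim
    · exact h
  refine (countable_iUnion hscale).mono fun Q hQ => mem_iUnion.2 ?_
  obtain ⟨k, hk⟩ := ENNReal.exists_mem_Ico_zpow (hcube Q hQ).volume_ne_zero
    (hcube Q hQ).volume_ne_top ENNReal.one_lt_two ENNReal.ofNat_ne_top
  exact ⟨k, hQ, hk⟩

theorem IsLaminar.pairwiseDisjoint_Eset (hlam : IsLaminar 𝒮) : 𝒮.PairwiseDisjoint (Eset 𝒮) := by
  have key : ∀ Q ∈ 𝒮, ∀ P, Q ⊂ P → Disjoint (Eset 𝒮 Q) (Eset 𝒮 P) := fun Q hQ P hlt =>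
    Set.disjoint_left.2 fun x hxQ hxP => hxP.2 (mem_iUnion₂.2 ⟨Q, ⟨hQ, hlt⟩, hxQ.1⟩)
  intro Q hQ P hP hne
  rcases hlam Q hQ P hP with h | h | h
  · exact key Q hQ P (h.ssubset_of_ne hne)
  · exact (key P hP Q (h.ssubset_of_ne hne.symm)).symm
  · exact h.mono sdiff_subset sdiff_subset

theorem IsSparse.volume_le_two_mul_volume_Eset (h𝒮 : IsSparse 𝒮) (hQ : Q ∈ 𝒮)
    (hfin : volume Q ≠ ⊤) : volume Q ≤ 2 * volume (Eset 𝒮 Q) := by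
  have hcover : volume Q ≤ volume (Eset 𝒮 Q) + volume Q / 2 := calc
    volume Q ≤ volume (Eset 𝒮 Q ∪ strictUnion 𝒮 Q) :=
      measure_mono (by rw [Eset, sdiff_union_self]; exact subset_union_left)
    _ ≤ volume (Eset 𝒮 Q) + volume (strictUnion 𝒮 Q) := measure_union_le _ _
    _ ≤ volume (Eset 𝒮 Q) + volume Q / 2 := by gcongr; exact h𝒮 Q hQ
  have hhalf : volume Q / 2 ≤ volume (Eset 𝒮 Q) := by
    rw [← ENNReal.sub_half hfin]
    exact tsub_le_iff_right.2 hcover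
  calc volume Q = 2 * (volume Q / 2) :=
      (ENNReal.mul_div_cancel two_ne_zero ENNReal.ofNat_ne_top).symm
    _ ≤ 2 * volume (Eset 𝒮 Q) := by gcongr

theorem IsSparse.isSparseWith_Eset (h𝒮 : IsSparse 𝒮) (hlam : IsLaminar 𝒮)
    (hcube : ∀ Q ∈ 𝒮, IsHalfOpenCube Q) : IsSparseWith 𝒮 (Eset 𝒮) where
  subset _ _ := sdiff_subset
  measurableSet Q hQ := (hcube Q hQ).measurableSet.diff <|
    MeasurableSet.biUnion ((h𝒮.countable hlam hcube).mono fun _ h => h.1) fun P hP =>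
      (hcube P hP.1).measurableSet
  pairwiseDisjoint := hlam.pairwiseDisjoint_Eset
  volume_le Q hQ := h𝒮.volume_le_two_mul_volume_Eset hQ (hcube Q hQ).volume_ne_top

end Eset

section FiniteMaximal

variable {n : ℕ} {f g : (Fin n → ℝ) → ℝ≥0∞} {μ ν : Measure (Fin n → ℝ)}
  {Q : Set (Fin n → ℝ)}

theorem volume_closedBall_mul (x : Fin n → ℝ) {r s : ℝ} (hr : 0 ≤ r) (hs : 0 ≤ s) :
    volume (Metric.closedBall x (s * r)) =
      ENNReal.ofReal s ^ n * volume (Metric.closedBall x r) := by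
  rw [Real.volume_pi_closedBall _ hr, Real.volume_pi_closedBall _ (by positivity),
    ← ENNReal.ofReal_pow hs, ← ENNReal.ofReal_mul (by positivity), Fintype.card_fin, ← mul_pow]
  ring_nf

theorem volume_biUnion_closedBall_le {𝔅 : Set ((Fin n → ℝ) × ℝ)} {r : ℝ} {A : ℝ≥0∞}
    {U : Set (Fin n → ℝ)} (hr : ∀ b ∈ 𝔅, 0 < b.2 ∧ b.2 ≤ r)
    (hU : ∀ b ∈ 𝔅, Metric.closedBall b.1 b.2 ⊆ U)
    (hν : ∀ b ∈ 𝔅, volume (Metric.closedBall b.1 b.2) ≤ A * ν (Metric.closedBall b.1 b.2)) :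
    volume (⋃ b ∈ 𝔅, Metric.closedBall b.1 b.2) ≤ 5 ^ n * (A * ν U) := by
  obtain ⟨u, hu𝔅, hdisj, hcover⟩ :=
    Vitali.exists_disjoint_subfamily_covering_enlargement_closedBall 𝔅 Prod.fst Prod.snd r
      (fun b hb => (hr b hb).2) 5 (by norm_num)
  have hcount : u.Countable := hdisj.countable_of_nonempty_interior fun b hb =>
    (Metric.nonempty_ball.2 (hr b (hu𝔅 hb)).1).mono Metric.ball_subset_interior_closedBall
  have := hcount.to_subtype
  calc volume (⋃ b ∈ 𝔅, Metric.closedBall b.1 b.2)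
      ≤ volume (⋃ b ∈ u, Metric.closedBall b.1 (5 * b.2)) := by
        refine measure_mono (iUnion₂_subset fun b hb => ?_)
        obtain ⟨b', hb', hsub⟩ := hcover b hb
        exact hsub.trans (subset_biUnion_of_mem (u := fun b => Metric.closedBall b.1 (5 * b.2)) hb')
    _ ≤ ∑' b : u, volume (Metric.closedBall b.1.1 (5 * b.1.2)) :=
        measure_biUnion_le _ hcount _
    _ ≤ ∑' b : u, 5 ^ n * (A * ν (Metric.closedBall b.1.1 b.1.2)) :=
        ENNReal.tsum_le_tsum fun ⟨b, hb⟩ => by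
          rw [volume_closedBall_mul _ (hr b (hu𝔅 hb)).1.le (by norm_num), ENNReal.ofReal_ofNat]
          gcongr
          exact hν b (hu𝔅 hb)
    _ = 5 ^ n * (A * ν (⋃ b ∈ u, Metric.closedBall b.1 b.2)) := by
        rw [ENNReal.tsum_mul_left, ENNReal.tsum_mul_left,
          measure_biUnion hcount hdisj fun _ _ => measurableSet_closedBall]
    _ ≤ 5 ^ n * (A * ν U) := by
        gcongr
        exact iUnion₂_subset fun b hb => hU b (hu𝔅 hb)

theorem radius_lt_of_density_lt {x y : Fin n → ℝ} {r s : ℝ} (hr : 0 ≤ r)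
    (hlt : density μ (Metric.closedBall x r) <
      density (μ.restrict (Metric.closedBall x r)) (Metric.closedBall y s)) : s < r := by
  contrapose! hlt
  refine density_restrict_le_of_volume_le measurableSet_closedBall (.inl ?_)
  rw [Real.volume_pi_closedBall _ hr, Real.volume_pi_closedBall _ (hr.trans hlt)]
  gcongr

theorem volume_lt_maximalFun_le {c : ℝ≥0∞}
    (hc : ∀ B, IsCube B → volume B ≤ 2 * volume (B ∩ {x | density μ B ≤ c * f x}))
    {x : Fin n → ℝ} {r : ℝ} (hr : 0 ≤ r) {t : ℝ≥0∞} (ht : density μ (Metric.closedBall x r) < t) :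
    volume (Metric.closedBall x r ∩ {y | t < maximalFun (μ.restrict (Metric.closedBall x r)) y}) ≤
      5 ^ n * (2 * volume (Metric.closedBall x (3 * r) ∩ {y | t ≤ c * f y})) := by
  set μr := μ.restrict (Metric.closedBall x r)
  set 𝔅 : Set ((Fin n → ℝ) × ℝ) := {b | 0 < b.2 ∧
    (Metric.closedBall b.1 b.2 ∩ Metric.closedBall x r).Nonempty ∧
    t < density μr (Metric.closedBall b.1 b.2)}
  have hcover : Metric.closedBall x r ∩ {y | t < maximalFun μr y} ⊆
      ⋃ b ∈ 𝔅, Metric.closedBall b.1 b.2 := by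
    rintro y ⟨hyx, hy⟩
    obtain ⟨B, hy⟩ := lt_iSup_iff.1 (mem_ofPred_eq ▸ hy)
    obtain ⟨⟨hB, hyB⟩, hy⟩ := lt_iSup_iff.1 hy
    obtain ⟨z, s, hs, rfl⟩ := hB.exists_eq_closedBall
    exact mem_iUnion₂.2 ⟨(z, s), ⟨hs, ⟨y, hyB, hyx⟩, hy⟩, hyB⟩
  have hradius : ∀ b ∈ 𝔅, b.2 < r := fun b hb => radius_lt_of_density_lt hr (ht.trans hb.2.2)
  have hU : ∀ b ∈ 𝔅, Metric.closedBall b.1 b.2 ⊆ Metric.closedBall x (3 * r) := by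
    rintro b hb z hz
    obtain ⟨y, hyb, hyx⟩ := hb.2.1
    have hzy := dist_triangle_right z y b.1
    have hzx := dist_triangle z y x
    rw [Metric.mem_closedBall] at *
    linarith [hradius b hb]
  have hhalf : ∀ b ∈ 𝔅, volume (Metric.closedBall b.1 b.2) ≤
      2 * volume.restrict {y | t ≤ c * f y} (Metric.closedBall b.1 b.2) := fun b hb => by
    rw [Measure.restrict_apply measurableSet_closedBall]
    refine (hc _ (isCube_closedBall b.1 hb.1)).trans ?_
    gcongr 2 * volume (_ ∩ ?_)
    exact fun y hy => hb.2.2.le.trans ((density_restrict_le _ _ _).trans hy)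
  rw [← Measure.restrict_apply (s := {y | t ≤ c * f y}) measurableSet_closedBall]
  exact (measure_mono hcover).trans
    (volume_biUnion_closedBall_le (fun b hb => ⟨hb.1, (hradius b hb).le⟩) hU hhalf)

theorem density_withDensity (f : (Fin n → ℝ) → ℝ≥0∞) (hQ : MeasurableSet Q) :
    density (volume.withDensity f) Q = ∫⁻ x, f x ∂ProbabilityTheory.cond volume Q := by
  rw [density, withDensity_apply f hQ, ProbabilityTheory.cond, lintegral_smul_measure, smul_eq_mul,
    ENNReal.div_eq_inv_mul]

theorem IsCube.isProbabilityMeasure_cond (hQ : IsCube Q) :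
    IsProbabilityMeasure (ProbabilityTheory.cond volume Q) :=
  ProbabilityTheory.cond_isProbabilityMeasure_of_finite hQ.volume_ne_zero hQ.volume_ne_top

theorem one_le_apDensity_withDensity {p : ℝ} (hp : 1 ≤ p) (hf : AEMeasurable f)
    (hg : AEMeasurable g) (hfg : ∀ x, 1 ≤ f x ^ (p - 1) * g x) (hQ : IsCube Q) :
    1 ≤ apDensity p (volume.withDensity f) (volume.withDensity g) Q := by
  have := hQ.isProbabilityMeasure_cond
  have hac : ProbabilityTheory.cond volume Q ≪ volume := ProbabilityTheory.cond_absolutelyContinuous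
  rw [apDensity, density_withDensity f hQ.measurableSet, density_withDensity g hQ.measurableSet]
  exact one_le_lintegral_rpow_mul_lintegral (hf.mono_ac hac) (hg.mono_ac hac) (by linarith) hfg

theorem volume_le_two_mul_volume_density_le {p : ℝ} (hp : 1 < p) (hg : AEMeasurable g)
    (hfg : ∀ x, 1 ≤ f x ^ (p - 1) * g x) (hQ : IsCube Q) {T : ℝ≥0∞}
    (hT : apDensity p (volume.withDensity f) (volume.withDensity g) Q ≤ T) :
    volume Q ≤ 2 * volume
      (Q ∩ {x | density (volume.withDensity f) Q ≤ (2 * T) ^ (1 / (p - 1)) * f x}) := by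
  have := hQ.isProbabilityMeasure_cond
  have hac : ProbabilityTheory.cond volume Q ≪ volume := ProbabilityTheory.cond_absolutelyContinuous
  rw [apDensity, density_withDensity f hQ.measurableSet, density_withDensity g hQ.measurableSet]
    at hT
  rw [density_withDensity f hQ.measurableSet]
  have h := one_le_two_mul_measure_lintegral_le_mul (hg.mono_ac hac) (by linarith) hfg hT
  rw [ProbabilityTheory.cond_apply hQ.measurableSet, ← mul_assoc, mul_comm 2, mul_assoc,
    ← ENNReal.div_eq_inv_mul] at h
  simpa only [one_mul] using (ENNReal.le_div_iff_mul_le (.inl hQ.volume_ne_zero)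
    (.inl hQ.volume_ne_top)).1 h

theorem setLIntegral_maximalFun_ne_top [IsLocallyFiniteMeasure (volume.withDensity f)]
    (hf : AEMeasurable f) {c : ℝ≥0∞} (hcfin : c ≠ ⊤)
    (hc : ∀ B, IsCube B →
      volume B ≤ 2 * volume (B ∩ {x | density (volume.withDensity f) B ≤ c * f x}))
    (hQ : IsCube Q) :
    ∫⁻ x in Q, maximalFun ((volume.withDensity f).restrict Q) x ≠ ⊤ := by
  obtain ⟨x, r, hr, rfl⟩ := hQ.exists_eq_closedBall
  set μ := volume.withDensity f
  set Q := Metric.closedBall x r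
  have hdens : density μ Q ≠ ⊤ :=
    ENNReal.div_ne_top hQ.isCompact.measure_lt_top.ne hQ.volume_ne_zero
  have hlevel : ∀ t, (density μ Q).toReal < t →
      volume.restrict Q {y | ENNReal.ofReal t < maximalFun (μ.restrict Q) y} ≤
        5 ^ n * 2 *
          volume.restrict (Metric.closedBall x (3 * r)) {y | ENNReal.ofReal t ≤ c * f y} := by
    intro t ht
    rw [Measure.restrict_apply' measurableSet_closedBall,
      Measure.restrict_apply' measurableSet_closedBall, inter_comm, inter_comm {y | _ ≤ c * f y}]
    rw [mul_assoc]
    exact volume_lt_maximalFun_le hc hr.le ((ENNReal.lt_ofReal_iff_toReal_lt hdens).2 ht)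
  refine ne_top_of_le_ne_top ?_ (lintegral_le_of_meas_lt_le (hf.const_mul c).restrict
    (by finiteness) hlevel)
  rw [lintegral_const_mul' _ _ hcfin, ← withDensity_apply _ measurableSet_closedBall]
  have h3 : μ (Metric.closedBall x (3 * r)) ≠ ⊤ :=
    (isCompact_closedBall x (3 * r)).measure_lt_top.ne
  have hQfin : volume.restrict Q univ ≠ ⊤ := by
    rw [Measure.restrict_apply_univ]
    exact hQ.volume_ne_top
  finiteness

end FiniteMaximal

section Weight

variable {n : ℕ} {f : (Fin n → ℝ) → ℝ} {Q : Set (Fin n → ℝ)}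

/-- The measure `f dx` with Lebesgue density `f`; negative values of `f` are truncated to `0`. -/
def weightMeasure (f : (Fin n → ℝ) → ℝ) : Measure (Fin n → ℝ) :=
  volume.withDensity fun x => ENNReal.ofReal (f x)

theorem weightMeasure_apply (f : (Fin n → ℝ) → ℝ) (Q : Set (Fin n → ℝ)) :
    weightMeasure f Q = ∫⁻ x in Q, ENNReal.ofReal (f x) :=
  withDensity_apply' _ Q

theorem weightMeasure_indicator (hQ : MeasurableSet Q) :
    weightMeasure (Q.indicator f) = (weightMeasure f).restrict Q := by
  have hcomp : (fun x => ENNReal.ofReal (Q.indicator f x)) =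
      Q.indicator fun x => ENNReal.ofReal (f x) :=
    (indicator_comp_of_zero (g := ENNReal.ofReal) ENNReal.ofReal_zero).symm
  rw [weightMeasure, weightMeasure, hcomp, withDensity_indicator hQ, restrict_withDensity hQ]

theorem isLocallyFiniteMeasure_weightMeasure (hf : LocallyIntegrable f) :
    IsLocallyFiniteMeasure (weightMeasure f) where
  finiteAtNhds x := by
    obtain ⟨U, hU, hint⟩ := hf x
    exact ⟨U, hU, by rw [weightMeasure_apply]; exact hint.lintegral_lt_top⟩

theorem ofReal_setIntegral (hf0 : 0 ≤ f) (hf : IntegrableOn f Q) :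
    ENNReal.ofReal (∫ x in Q, f x) = weightMeasure f Q := by
  rw [weightMeasure_apply, ofReal_integral_eq_lintegral_ofReal hf (.of_forall hf0)]

theorem avg_nonneg (hf0 : 0 ≤ f) : 0 ≤ avg Q f :=
  mul_nonneg (by positivity) (integral_nonneg hf0)

theorem ofReal_avg (hf0 : 0 ≤ f) (hf : IntegrableOn f Q) (hQ : volume Q ≠ 0) :
    ENNReal.ofReal (avg Q f) = density (weightMeasure f) Q := by
  rw [avg, ENNReal.ofReal_mul (by positivity), ofReal_setIntegral hf0 hf, ← ENNReal.toReal_inv,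
    ENNReal.ofReal_toReal (ENNReal.inv_ne_top.2 hQ), density, ENNReal.div_eq_inv_mul]

theorem maxHL_eq_maximalFun (hf0 : 0 ≤ f) (hf : LocallyIntegrable f) (x : Fin n → ℝ) :
    maxHL f x = maximalFun (weightMeasure f) x := by
  refine iSup_congr fun Q => iSup_congr fun hQ => ?_
  rw [← ofReal_avg hf0 (hf.integrableOn_isCompact hQ.1.isCompact) hQ.1.volume_ne_zero]
  simp only [abs_of_nonneg (hf0 _)]

theorem sparseM_eq_sparseOp {𝒮 : Set (Set (Fin n → ℝ))} (h𝒮 : ∀ Q ∈ 𝒮, volume Q ≠ 0)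
    (hf0 : 0 ≤ f) (hf : Integrable f) (x : Fin n → ℝ) :
    sparseM 𝒮 f x = sparseOp 𝒮 (Eset 𝒮) (weightMeasure f) x := by
  rw [sparseM, sparseOp]
  exact tsum_congr fun Q => by rw [ofReal_avg hf0 hf.integrableOn (h𝒮 Q Q.2)]

theorem AinfFWr_nonneg (hf0 : 0 ≤ f) (Q : Set (Fin n → ℝ)) : 0 ≤ AinfFWr f Q :=
  div_nonneg ENNReal.toReal_nonneg (integral_nonneg hf0)

theorem ofReal_AinfFWr_mul (hf0 : 0 ≤ f) (hf : LocallyIntegrable f) (hQ : IsCube Q)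
    (hQf : weightMeasure f Q ≠ 0)
    (hfin : ∫⁻ x in Q, maximalFun ((weightMeasure f).restrict Q) x ≠ ⊤) :
    ENNReal.ofReal (AinfFWr f Q) * weightMeasure f Q =
      ∫⁻ x in Q, maximalFun ((weightMeasure f).restrict Q) x := by
  have hfQ : IntegrableOn f Q := hf.integrableOn_isCompact hQ.isCompact
  have hmass : weightMeasure f Q ≠ ⊤ := by
    rw [← ofReal_setIntegral hf0 hfQ]
    exact ENNReal.ofReal_ne_top
  have hpos : 0 < ∫ x in Q, f x := by
    rwa [← ENNReal.ofReal_pos, ofReal_setIntegral hf0 hfQ, pos_iff_ne_zero]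
  have hmax : ∀ x, maxHL (Q.indicator f) x = maximalFun ((weightMeasure f).restrict Q) x :=
    fun x => by
      rw [maxHL_eq_maximalFun (indicator_nonneg fun x _ => hf0 x) (hf.indicator hQ.measurableSet),
        weightMeasure_indicator hQ.measurableSet]
  simp only [AinfFWr, hmax]
  rw [ENNReal.ofReal_div_of_pos hpos, ENNReal.ofReal_toReal hfin, ofReal_setIntegral hf0 hfQ,
    ENNReal.div_mul_cancel hQf hmass]

end Weight

section DualPair

variable {n : ℕ} {p : ℝ} {w σ : (Fin n → ℝ) → ℝ} {Q : Set (Fin n → ℝ)}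

/-- A weight `w` and its dual weight `σ = w^{1-p'}`, both locally integrable, where the exponent
`1 - p'` is written as `-1 / (p - 1)`. -/
structure IsDualPair (p : ℝ) (w σ : (Fin n → ℝ) → ℝ) : Prop where
  pos : ∀ x, 0 < w x
  eq_rpow : σ = fun x => w x ^ (-(1 / (p - 1)))
  locallyIntegrable : LocallyIntegrable w
  locallyIntegrable_dual : LocallyIntegrable σ

namespace IsDualPair

theorem dual_pos (h : IsDualPair p w σ) (x : Fin n → ℝ) : 0 < σ x := by
  rw [h.eq_rpow]
  exact Real.rpow_pos_of_pos (h.pos x) _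

theorem dual_rpow_mul (h : IsDualPair p w σ) (hp : 1 < p) (x : Fin n → ℝ) :
    σ x ^ (p - 1) * w x = 1 := by
  have hp' : p - 1 ≠ 0 := (sub_pos.2 hp).ne'
  rw [h.eq_rpow, ← Real.rpow_mul (h.pos x).le, neg_mul, one_div_mul_cancel hp',
    Real.rpow_neg_one, inv_mul_cancel₀ (h.pos x).ne']

theorem one_le_ofReal_rpow_mul (h : IsDualPair p w σ) (hp : 1 < p) (x : Fin n → ℝ) :
    1 ≤ ENNReal.ofReal (σ x) ^ (p - 1) * ENNReal.ofReal (w x) := by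
  rw [ENNReal.ofReal_rpow_of_nonneg (h.dual_pos x).le (sub_pos.2 hp).le,
    ← ENNReal.ofReal_mul (Real.rpow_nonneg (h.dual_pos x).le _), h.dual_rpow_mul hp,
    ENNReal.ofReal_one]

theorem ApQ_dual (h : IsDualPair p w σ) (hp : 1 < p) (Q : Set (Fin n → ℝ)) :
    ApQ (p / (p - 1)) σ Q = avg Q σ * avg Q w ^ (1 / (p - 1)) := by
  have hp' : p - 1 ≠ 0 := (sub_pos.2 hp).ne'
  have hexp : p / (p - 1) - 1 = 1 / (p - 1) := by field_simp; ring
  have hw : ∀ x, σ x ^ (-(p - 1)) = w x := fun x => by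
    rw [Real.rpow_neg (h.dual_pos x).le]
    exact inv_eq_of_mul_eq_one_right (h.dual_rpow_mul hp x)
  simp only [ApQ, hexp, one_div_one_div, hw]

theorem ApQ_nonneg (h : IsDualPair p w σ) (hp : 1 < p) (Q : Set (Fin n → ℝ)) :
    0 ≤ ApQ (p / (p - 1)) σ Q := by
  rw [h.ApQ_dual hp]
  exact mul_nonneg (avg_nonneg fun x => (h.dual_pos x).le)
    (Real.rpow_nonneg (avg_nonneg fun x => (h.pos x).le) _)

theorem ofReal_ApQ_rpow (h : IsDualPair p w σ) (hp : 1 < p) (hQ : IsCube Q) :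
    ENNReal.ofReal (ApQ (p / (p - 1)) σ Q ^ (p - 1)) =
      apDensity p (weightMeasure σ) (weightMeasure w) Q := by
  have hp' : 0 < p - 1 := sub_pos.2 hp
  have hσ0 : 0 ≤ σ := fun x => (h.dual_pos x).le
  have hw0 : 0 ≤ w := fun x => (h.pos x).le
  have hpow : (avg Q σ * avg Q w ^ (1 / (p - 1))) ^ (p - 1) = avg Q σ ^ (p - 1) * avg Q w := by
    rw [Real.mul_rpow (avg_nonneg hσ0) (Real.rpow_nonneg (avg_nonneg hw0) _),
      ← Real.rpow_mul (avg_nonneg hw0), one_div_mul_cancel hp'.ne', Real.rpow_one]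
  rw [h.ApQ_dual hp, hpow, ENNReal.ofReal_mul (Real.rpow_nonneg (avg_nonneg hσ0) _),
    ← ENNReal.ofReal_rpow_of_nonneg (avg_nonneg hσ0) hp'.le,
    ofReal_avg hσ0 (h.locallyIntegrable_dual.integrableOn_isCompact hQ.isCompact)
      hQ.volume_ne_zero,
    ofReal_avg hw0 (h.locallyIntegrable.integrableOn_isCompact hQ.isCompact) hQ.volume_ne_zero,
    apDensity]

theorem one_le_apDensity (h : IsDualPair p w σ) (hp : 1 < p) (hQ : IsCube Q) :
    1 ≤ apDensity p (weightMeasure σ) (weightMeasure w) Q :=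
  one_le_apDensity_withDensity hp.le
    h.locallyIntegrable_dual.aestronglyMeasurable.aemeasurable.ennreal_ofReal
    h.locallyIntegrable.aestronglyMeasurable.aemeasurable.ennreal_ofReal
    (h.one_le_ofReal_rpow_mul hp) hQ

theorem one_le_ApQ (h : IsDualPair p w σ) (hp : 1 < p) (hQ : IsCube Q) :
    1 ≤ ApQ (p / (p - 1)) σ Q := by
  have h1 := h.one_le_apDensity hp hQ
  rw [← h.ofReal_ApQ_rpow hp hQ, ENNReal.one_le_ofReal] at h1
  by_contra! hlt
  exact h1.not_gt (Real.rpow_lt_one (h.ApQ_nonneg hp Q) hlt (sub_pos.2 hp))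

theorem setLIntegral_maximalFun_ne_top (h : IsDualPair p w σ) (hp : 1 < p) {T : ℝ≥0∞}
    (hTfin : T ≠ ⊤)
    (hT : ∀ Q, IsCube Q → apDensity p (weightMeasure σ) (weightMeasure w) Q ≤ T)
    (hQ : IsCube Q) : ∫⁻ x in Q, maximalFun ((weightMeasure σ).restrict Q) x ≠ ⊤ := by
  have : IsLocallyFiniteMeasure (volume.withDensity fun x => ENNReal.ofReal (σ x)) :=
    isLocallyFiniteMeasure_weightMeasure h.locallyIntegrable_dual
  exact _root_.setLIntegral_maximalFun_ne_top
    h.locallyIntegrable_dual.aestronglyMeasurable.aemeasurable.ennreal_ofReal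
    (ENNReal.rpow_ne_top_of_nonneg (one_div_pos.2 (sub_pos.2 hp)).le (by finiteness))
    (fun B hB => volume_le_two_mul_volume_density_le hp
      h.locallyIntegrable.aestronglyMeasurable.aemeasurable.ennreal_ofReal
      (h.one_le_ofReal_rpow_mul hp) hB (hT B hB)) hQ

theorem apDensity_mul_setLIntegral_eq (h : IsDualPair p w σ) (hp : 1 < p) (hQ : IsCube Q)
    (hfin : ∫⁻ x in Q, maximalFun ((weightMeasure σ).restrict Q) x ≠ ⊤) :
    apDensity p (weightMeasure σ) (weightMeasure w) Q *
        ∫⁻ x in Q, maximalFun ((weightMeasure σ).restrict Q) x =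
      ENNReal.ofReal
          ((ApQ (p / (p - 1)) σ Q ^ ((p - 1) / p) * AinfFWr σ Q ^ (1 / p)) ^ p) *
        weightMeasure σ Q := by
  have hp0 : p ≠ 0 := by linarith
  have hA : 0 ≤ ApQ (p / (p - 1)) σ Q := h.ApQ_nonneg hp Q
  have hF : 0 ≤ AinfFWr σ Q := AinfFWr_nonneg (fun x => (h.dual_pos x).le) Q
  have hmass : weightMeasure σ Q ≠ 0 := fun h0 => by
    have h1 := h.one_le_apDensity hp hQ
    simp [apDensity, density, h0, ENNReal.zero_rpow_of_pos (sub_pos.2 hp)] at h1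
  rw [Real.mul_rpow (Real.rpow_nonneg hA _) (Real.rpow_nonneg hF _), ← Real.rpow_mul hA,
    ← Real.rpow_mul hF, div_mul_cancel₀ _ hp0, one_div_mul_cancel hp0, Real.rpow_one,
    ENNReal.ofReal_mul (Real.rpow_nonneg hA _), mul_assoc,
    ofReal_AinfFWr_mul (fun x => (h.dual_pos x).le) h.locallyIntegrable_dual hQ hmass hfin,
    h.ofReal_ApQ_rpow hp hQ]

theorem setLIntegral_sparseM (h : IsDualPair p w σ) {𝒮 : Set (Set (Fin n → ℝ))}
    (h𝒮 : ∀ Q ∈ 𝒮, volume Q ≠ 0) (hQ : IsCube Q) :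
    ∫⁻ x in Q, sparseM 𝒮 (Q.indicator σ) x ^ p * ENNReal.ofReal (w x) =
      ∫⁻ x in Q, sparseOp 𝒮 (Eset 𝒮) ((weightMeasure σ).restrict Q) x ^ p
        ∂weightMeasure w := by
  have hint : Integrable (Q.indicator σ) :=
    (integrable_indicator_iff hQ.measurableSet).2
      (h.locallyIntegrable_dual.integrableOn_isCompact hQ.isCompact)
  have hsparse : ∀ x, sparseM 𝒮 (Q.indicator σ) x =
      sparseOp 𝒮 (Eset 𝒮) ((weightMeasure σ).restrict Q) x := fun x => by
    rw [sparseM_eq_sparseOp h𝒮 (indicator_nonneg fun x _ => (h.dual_pos x).le) hint,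
      weightMeasure_indicator hQ.measurableSet]
  have hw : AEMeasurable (fun x => ENNReal.ofReal (w x)) :=
    h.locallyIntegrable.aestronglyMeasurable.aemeasurable.ennreal_ofReal
  rw [weightMeasure, restrict_withDensity hQ.measurableSet,
    lintegral_withDensity_eq_lintegral_mul_non_measurable₀ _ hw.restrict
      (.of_forall fun _ => ENNReal.ofReal_lt_top)]
  simp only [hsparse, Pi.mul_apply, mul_comm]

end IsDualPair

end DualPair

section SparseBound

variable {n : ℕ} {p : ℝ} {w σ : (Fin n → ℝ) → ℝ} {𝒮 : Set (Set (Fin n → ℝ))}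

theorem one_add_mul_log_le (hp : 1 ≤ p) {A : ℝ} (hA : 1 ≤ A) :
    1 + Real.log (A ^ (p - 1)) ≤ p * (1 + Real.log A) := by
  rw [Real.log_rpow (by linarith)]
  linarith [Real.log_nonneg hA]

theorem IsDualPair.apDensity_le (h : IsDualPair p w σ) (hp : 1 < p) {Q : Set (Fin n → ℝ)}
    (hQ : IsCube Q) {A : ℝ} (hA : ApQ (p / (p - 1)) σ Q ≤ A) :
    apDensity p (weightMeasure σ) (weightMeasure w) Q ≤ ENNReal.ofReal (A ^ (p - 1)) := by
  rw [← h.ofReal_ApQ_rpow hp hQ]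
  exact ENNReal.ofReal_le_ofReal
    (Real.rpow_le_rpow (h.ApQ_nonneg hp Q) hA (sub_pos.2 hp).le)

theorem IsDualPair.apDensity_mul_setLIntegral_le (h : IsDualPair p w σ) (hp : 1 < p)
    {Q : Set (Fin n → ℝ)} (hQ : IsCube Q)
    (hfin : ∫⁻ x in Q, maximalFun ((weightMeasure σ).restrict Q) x ≠ ⊤) {B : ℝ}
    (hB : ApQ (p / (p - 1)) σ Q ^ ((p - 1) / p) * AinfFWr σ Q ^ (1 / p) ≤ B) :
    apDensity p (weightMeasure σ) (weightMeasure w) Q *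
        ∫⁻ x in Q, maximalFun ((weightMeasure σ).restrict Q) x ≤
      ENNReal.ofReal (B ^ p) * weightMeasure σ Q := by
  rw [h.apDensity_mul_setLIntegral_eq hp hQ hfin]
  have := mul_nonneg (Real.rpow_nonneg (h.ApQ_nonneg hp Q) ((p - 1) / p))
    (Real.rpow_nonneg (AinfFWr_nonneg (fun x => (h.dual_pos x).le) Q) (1 / p))
  gcongr

theorem IsDualPair.setLIntegral_sparseM_rpow_le (h : IsDualPair p w σ) (hp : 1 < p)
    (h𝒮 : IsSparse 𝒮) (hlam : IsLaminar 𝒮) (hcube : ∀ Q ∈ 𝒮, IsHalfOpenCube Q) {A B : ℝ}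
    (hA : ∀ Q, IsCube Q → ApQ (p / (p - 1)) σ Q ≤ A)
    (hB : ∀ Q, IsCube Q →
      ApQ (p / (p - 1)) σ Q ^ ((p - 1) / p) * AinfFWr σ Q ^ (1 / p) ≤ B)
    {R : Set (Fin n → ℝ)} (hR : IsCube R) :
    ∫⁻ x in R, sparseM 𝒮 (R.indicator σ) x ^ p * ENNReal.ofReal (w x) ≤
      ENNReal.ofReal (p * (2 * 9 ^ n * Real.exp 1 + 1) * (1 + Real.log A) * B ^ p *
        ∫ x in R, σ x) := by
  have hσ0 : 0 ≤ σ := fun x => (h.dual_pos x).le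
  have hA1 : 1 ≤ A := (h.one_le_ApQ hp hR).trans (hA R hR)
  have hT : ∀ Q, IsCube Q → 1 ≤ apDensity p (weightMeasure σ) (weightMeasure w) Q ∧
      apDensity p (weightMeasure σ) (weightMeasure w) Q ≤ ENNReal.ofReal (A ^ (p - 1)) :=
    fun Q hQ => ⟨h.one_le_apDensity hp hQ, h.apDensity_le hp hQ (hA Q hQ)⟩
  have hK : ∀ Q, IsCube Q → apDensity p (weightMeasure σ) (weightMeasure w) Q *
      ∫⁻ x in Q, maximalFun ((weightMeasure σ).restrict Q) x ≤
        ENNReal.ofReal (B ^ p) * weightMeasure σ Q := fun Q hQ =>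
    h.apDensity_mul_setLIntegral_le hp hQ (h.setLIntegral_maximalFun_ne_top hp
      ENNReal.ofReal_ne_top (fun P hP => (hT P hP).2) hQ) (hB Q hQ)
  have hB0 : 0 ≤ B := (mul_nonneg (Real.rpow_nonneg (h.ApQ_nonneg hp R) _)
    (Real.rpow_nonneg (AinfFWr_nonneg hσ0 R) _)).trans (hB R hR)
  have hlog : 0 ≤ Real.log A := Real.log_nonneg hA1
  rw [h.setLIntegral_sparseM (fun Q hQ => (hcube Q hQ).volume_ne_zero) hR]
  calc _ ≤ ENNReal.ofReal ((2 * 9 ^ n * Real.exp 1 + 1) * (1 + Real.log (A ^ (p - 1)))) *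
          ENNReal.ofReal (B ^ p) * weightMeasure σ R :=
        (h𝒮.isSparseWith_Eset hlam hcube).setLIntegral_sparseOp_rpow_le hlam hcube hp.le
          (withDensity_absolutelyContinuous _ _) hT hK hR
    _ ≤ ENNReal.ofReal ((2 * 9 ^ n * Real.exp 1 + 1) * (p * (1 + Real.log A))) *
          ENNReal.ofReal (B ^ p) * weightMeasure σ R := by
        gcongr
        exact one_add_mul_log_le hp.le hA1
    _ = _ := by
        rw [← ofReal_setIntegral hσ0
            (h.locallyIntegrable_dual.integrableOn_isCompact hR.isCompact),
          ← ENNReal.ofReal_mul (by positivity), ← ENNReal.ofReal_mul (by positivity)]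
        ring_nf

end SparseBound

theorem stmt19_general (p : ℝ) (hp : 1 < p) (n : ℕ) :
    ∃ C > (0 : ℝ), ∀ 𝒮 : Set (Set (Fin n → ℝ)),
      IsLaminar 𝒮 → (∀ Q ∈ 𝒮, IsHalfOpenCube Q) → IsSparse 𝒮 →
      ∀ (w σ : (Fin n → ℝ) → ℝ), (∀ x, 0 < w x) →
      σ = (fun x => w x ^ (-(1 / (p - 1)))) →
      LocallyIntegrable w volume → LocallyIntegrable σ volume →
      BddAbove (Set.range fun Q : {Q : Set (Fin n → ℝ) // IsCube Q} =>
        ApQ (p / (p - 1)) σ Q.1) →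
      BddAbove (Set.range fun Q : {Q : Set (Fin n → ℝ) // IsCube Q} =>
        ApQ (p / (p - 1)) σ Q.1 ^ ((p - 1) / p) * AinfFWr σ Q.1 ^ (1 / p)) →
      ∀ R : Set (Fin n → ℝ), IsCube R →
      ∫⁻ x in R, sparseM 𝒮 (R.indicator σ) x ^ p * ENNReal.ofReal (w x) ≤
        ENNReal.ofReal (C *
          (1 + Real.log (⨆ Q : {Q : Set (Fin n → ℝ) // IsCube Q},
            ApQ (p / (p - 1)) σ Q.1)) *
          (⨆ Q : {Q : Set (Fin n → ℝ) // IsCube Q},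
            ApQ (p / (p - 1)) σ Q.1 ^ ((p - 1) / p) * AinfFWr σ Q.1 ^ (1 / p)) ^ p *
          ∫ x in R, σ x) :=
  ⟨p * (2 * 9 ^ n * Real.exp 1 + 1), by positivity,
    fun _ hlam hcube h𝒮 _ _ hw hσ hwint hσint hA hB _ hR =>
      IsDualPair.setLIntegral_sparseM_rpow_le ⟨hw, hσ, hwint, hσint⟩ hp h𝒮 hlam hcube
        (fun Q hQ => le_ciSup hA ⟨Q, hQ⟩) (fun Q hQ => le_ciSup hB ⟨Q, hQ⟩) hR⟩

/-- Testing bound for the sparse maximal operator with one-supremum mixed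
`A_{p'}`-`A_∞` (Fujii–Wilson) constant and a logarithmic factor:
`∫_R M^𝒮(χ_R σ)^p w ≲ (1 + log [σ]_{A_{p'}}) [σ]^p_{(A_{p'})^{1/p'}(A_∞)^{1/p}} σ(R)`. -/
theorem stmt19 (p : ℝ) (hp : 1 < p) (n : ℕ) :
    ∃ C > (0 : ℝ), ∀ (𝒟 𝒮 : Set (Set (Fin n → ℝ))),
      IsDyadicGrid 𝒟 → 𝒮 ⊆ 𝒟 → IsSparse 𝒮 →
      ∀ (w σ : (Fin n → ℝ) → ℝ), (∀ x, 0 < w x) →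
      σ = (fun x => w x ^ (-(1 / (p - 1)))) →
      LocallyIntegrable w volume → LocallyIntegrable σ volume →
      BddAbove (Set.range fun Q : {Q : Set (Fin n → ℝ) // IsCube Q} =>
        ApQ (p / (p - 1)) σ Q.1) →
      BddAbove (Set.range fun Q : {Q : Set (Fin n → ℝ) // IsCube Q} =>
        ApQ (p / (p - 1)) σ Q.1 ^ ((p - 1) / p) * AinfFWr σ Q.1 ^ (1 / p)) →
      ∀ R : Set (Fin n → ℝ), IsCube R →
      ∫⁻ x in R, sparseM 𝒮 (R.indicator σ) x ^ p * ENNReal.ofReal (w x) ≤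
        ENNReal.ofReal (C *
          (1 + Real.log (⨆ Q : {Q : Set (Fin n → ℝ) // IsCube Q},
            ApQ (p / (p - 1)) σ Q.1)) *
          (⨆ Q : {Q : Set (Fin n → ℝ) // IsCube Q},
            ApQ (p / (p - 1)) σ Q.1 ^ ((p - 1) / p) * AinfFWr σ Q.1 ^ (1 / p)) ^ p *
          ∫ x in R, σ x) := by
  have ⟨C, hC, h⟩ := stmt19_general p hp n
  exact ⟨C, hC, fun _ 𝒮 h𝒟 h𝒮𝒟 => h 𝒮 (fun Q hQ P hP => h𝒟.2.1 Q (h𝒮𝒟 hQ) P (h𝒮𝒟 hP))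
    fun Q hQ => (h𝒟.1 Q (h𝒮𝒟 hQ)).elim fun _ hk => IsDyadicCubeOf.isHalfOpenCube hk⟩
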